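/- The maps DTS and DTR are each bijections from the set of integer sequences (p_1,…,p_n) with 0 ≤ p_i ≤ 2(i−1) for all i onto the set of cover-inclusive Dyck tilings of order n. -/

import Mathlib

open Finset

noncomputable section

/-- A Dyck path of order `n`: a word of `2n` steps (`true` = up-step `(+1,+1)`,
`false` = down-step `(+1,-1)`) from `(-n,0)` to `(n,0)` staying weakly above the x-axis. -/
structure DyckPath (n : ℕ) where
  step : Fin (2 * n) → Bool
  balanced : (Finset.univ.filter fun i => step i = true).card = n
  nonneg : ∀ k : ℕ, k ≤ 2 * n →
    (Finset.univ.filter fun i : Fin (2 * n) => (i : ℕ) < k ∧ step i = false).card ≤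
      (Finset.univ.filter fun i : Fin (2 * n) => (i : ℕ) < k ∧ step i = true).card

namespace DyckPath

/-- Height of the path above column `x` (columns run from `-n` to `n`). -/
def ht {n : ℕ} (P : DyckPath n) (x : ℤ) : ℤ :=
  ((Finset.univ.filter fun i : Fin (2 * n) => ((i : ℕ) : ℤ) < x + n ∧ P.step i = true).card : ℤ) -
    ((Finset.univ.filter fun i : Fin (2 * n) => ((i : ℕ) : ℤ) < x + n ∧ P.step i = false).card : ℤ)

/-- Height of the path at lattice point number `k`, `0 ≤ k ≤ 2n`
(point `k` lies at column `k - n`). -/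
def pt {n : ℕ} (P : DyckPath n) (k : ℕ) : ℤ := P.ht ((k : ℤ) - n)

end DyckPath

/-- `IsChord P p q`: the up-step at (0-indexed) position `p` matches the down-step at
position `q`, forming a chord of `P`. -/
def IsChord {n : ℕ} (P : DyckPath n) (p q : ℕ) : Prop :=
  p < q ∧ q < 2 * n ∧
    (∃ hp : p < 2 * n, P.step ⟨p, hp⟩ = true) ∧
    (∃ hq : q < 2 * n, P.step ⟨q, hq⟩ = false) ∧
    P.pt (q + 1) = P.pt p ∧
    ∀ m : ℕ, p < m → m ≤ q → P.pt p < P.pt m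

/-- A natural labeling of the chord poset of `P`: the chord labeled `i` has its up-step at
(0-indexed) position `l i` and matching down-step at position `r i`; distinct labels name
distinct chords; and if one chord is nested inside another it receives a larger label. -/
structure ChordLabeling {n : ℕ} (P : DyckPath n) where
  l : Fin n → ℕ
  r : Fin n → ℕ
  chord : ∀ i, IsChord P (l i) (r i)
  inj : Function.Injective l
  natural : ∀ i j : Fin n, l j < l i → r i < r j → j < i

/-- The length of the chord labeled `i`: the number of up steps of `P` between and
including its two endpoints. -/
def chordLen {n : ℕ} {P : DyckPath n} (C : ChordLabeling P) (i : Fin n) : ℕ :=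
  (Finset.univ.filter fun m : Fin (2 * n) =>
    C.l i ≤ (m : ℕ) ∧ (m : ℕ) ≤ C.r i ∧ P.step m = true).card

/-- The growth sequence `p_1, …, p_n` associated with a natural chord labeling:
`p i = #{j<i : l j < l i} + #{j<i : r j < l i}`. -/
def seqOf {n : ℕ} {P : DyckPath n} (C : ChordLabeling P) (i : Fin n) : ℕ :=
  (Finset.univ.filter fun j : Fin n => j < i ∧ C.l j < C.l i).card +
    (Finset.univ.filter fun j : Fin n => j < i ∧ C.r j < C.l i).card

/-- `σ` is the standardization of the word `w` (with distinct letters). -/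
def IsStandardization {n : ℕ} (w : Fin n → ℕ) (σ : Equiv.Perm (Fin n)) : Prop :=
  ∀ i j : Fin n, σ i < σ j ↔ w i < w j

/-- `σ ∈ 𝓛(P_λ)`: σ is `L₀ ∘ L⁻¹` for some natural labeling `L` of the chord poset,
equivalently the standardization of the word of left endpoints of a natural labeling. -/
def LinExt {n : ℕ} (P : DyckPath n) (σ : Equiv.Perm (Fin n)) : Prop :=
  ∃ C : ChordLabeling P, IsStandardization C.l σ

/-- Successor index in `Fin n` (used only under the guard `i+1 < n`). -/
def nextIdx {n : ℕ} (i : Fin n) : Fin n := ⟨((i : ℕ) + 1) % n, Nat.mod_lt _ i.pos⟩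

/-- Descent set of a word: positions `i` with `i+1 < n` and `w i > w (i+1)`. -/
def descentFinset {n : ℕ} (w : Fin n → ℕ) : Finset (Fin n) :=
  Finset.univ.filter fun i => (i : ℕ) + 1 < n ∧ w (nextIdx i) < w i

/-- Number of inversions of a word. -/
def wordInv {n : ℕ} (w : Fin n → ℕ) : ℕ :=
  (Finset.univ.filter fun p : Fin n × Fin n => p.1 < p.2 ∧ w p.2 < w p.1).card

/-- The word of values of a permutation. -/
def permWord {n : ℕ} (σ : Equiv.Perm (Fin n)) : Fin n → ℕ := fun i => (σ i : ℕ)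

/-- inv(σ). -/
def permInv {n : ℕ} (σ : Equiv.Perm (Fin n)) : ℕ := wordInv (permWord σ)

/-- des(σ). -/
def permDes {n : ℕ} (σ : Equiv.Perm (Fin n)) : ℕ := (descentFinset (permWord σ)).card

/-- `REM_i(w) = {k > i : w i > w k > w (i+1)}`, the right embraced numbers. -/
def remSet {n : ℕ} (w : Fin n → ℕ) (i : Fin n) : Finset (Fin n) :=
  Finset.univ.filter fun k => i < k ∧ w (nextIdx i) < w k ∧ w k < w i

/-- desdif(σ) = Σ_{i ∈ DES σ} (σ i − σ (i+1)). -/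
def desdif {n : ℕ} (σ : Equiv.Perm (Fin n)) : ℕ :=
  ∑ i ∈ descentFinset (permWord σ), (permWord σ i - permWord σ (nextIdx i))

/-- res(σ) = Σ_{i ∈ DES σ} #{k < i : σ i > σ k > σ (i+1)}. -/
def resStat {n : ℕ} (σ : Equiv.Perm (Fin n)) : ℕ :=
  ∑ i ∈ descentFinset (permWord σ),
    (Finset.univ.filter fun k : Fin n =>
      k < i ∧ permWord σ (nextIdx i) < permWord σ k ∧ permWord σ k < permWord σ i).card

/-- The Mahonian statistic mad(σ) = desdif(σ) + res(σ). -/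
def mad {n : ℕ} (σ : Equiv.Perm (Fin n)) : ℕ := desdif σ + resStat σ

/-- σ avoids the pattern 231. -/
def Avoids231 {n : ℕ} (σ : Equiv.Perm (Fin n)) : Prop :=
  ¬∃ i j k : Fin n, i < j ∧ j < k ∧ σ k < σ i ∧ σ i < σ j

/-- The boxes of the skew shape `lam/mu` (with `mu` weakly above `lam`), each box
recorded by its bottom corner (a lattice point `(x, z)` with `z ≡ x + n (mod 2)`). -/
def skewCells {n : ℕ} (lam mu : DyckPath n) : Finset (ℤ × ℤ) :=
  ((Finset.Icc (-(n : ℤ)) n) ×ˢ (Finset.Icc (0 : ℤ) n)).filter fun c =>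
    lam.ht c.1 ≤ c.2 ∧ c.2 + 2 ≤ mu.ht c.1 ∧ (c.2 - c.1 - n) % 2 = 0

/-- A Dyck tile, recorded by the set of bottom corners of its boxes: these form
a Dyck-path shape, i.e. a ±1-step lattice path whose two ends are lowest. -/
def IsDyckTile (t : Finset (ℤ × ℤ)) : Prop :=
  ∃ (a b : ℤ) (f : ℤ → ℤ), a ≤ b ∧
    (∀ x : ℤ, a ≤ x → x < b → f (x + 1) = f x + 1 ∨ f (x + 1) = f x - 1) ∧
    f b = f a ∧ (∀ x : ℤ, a ≤ x → x ≤ b → f a ≤ f x) ∧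
    t = (Finset.Icc a b).image fun x => (x, f x)

/-- A Dyck tiling of order `n`: a tiling of the skew shape between two Dyck paths of
order `n` by Dyck tiles. -/
structure DyckTiling (n : ℕ) where
  lower : DyckPath n
  upper : DyckPath n
  below : ∀ x : ℤ, lower.ht x ≤ upper.ht x
  tiles : Finset (Finset (ℤ × ℤ))
  isDyck : ∀ t ∈ tiles, IsDyckTile t
  disj : ∀ t ∈ tiles, ∀ u ∈ tiles, t ≠ u → Disjoint t u
  cover : tiles.biUnion id = skewCells lower upper

namespace DyckTiling

/-- Number of boxes of the skew shape. -/
def area {n : ℕ} (T : DyckTiling n) : ℕ := (skewCells T.lower T.upper).card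

/-- Number of tiles. -/
def numTiles {n : ℕ} (T : DyckTiling n) : ℕ := T.tiles.card

/-- art(T) = (area(T) + tiles(T)) / 2. -/
def art {n : ℕ} (T : DyckTiling n) : ℕ := (T.area + T.numTiles) / 2

/-- dis(T): the number of step positions where the lower path steps down while the
upper path steps up. -/
def dis {n : ℕ} (T : DyckTiling n) : ℕ :=
  (Finset.univ.filter fun i : Fin (2 * n) =>
    T.lower.step i = false ∧ T.upper.step i = true).card

/-- Cover-inclusiveness: whenever a tile has a box strictly above a box of another tile,
its horizontal extent is contained in that of the other tile. -/
def CoverInclusive {n : ℕ} (T : DyckTiling n) : Prop :=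
  ∀ t ∈ T.tiles, ∀ u ∈ T.tiles,
    (∃ p ∈ t, ∃ q ∈ u, (p : ℤ × ℤ).1 = (q : ℤ × ℤ).1 ∧ (q : ℤ × ℤ).2 < (p : ℤ × ℤ).2) →
    ∀ p ∈ t, ∃ y : ℤ, ((p : ℤ × ℤ).1, y) ∈ u

end DyckTiling

/-- Height function of the spread at column `s` of a Dyck path. -/
def spreadHt {n : ℕ} (P : DyckPath n) (s x : ℤ) : ℤ :=
  if x < s then P.ht (x + 1) else if x = s then P.ht s + 1 else P.ht (x - 1)

/-- Spread of a tile at column `s`: points left of `s` move left, points right of `s`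
move right, and a point at column `s` is duplicated upward. -/
def spreadTile (s : ℤ) (t : Finset (ℤ × ℤ)) : Finset (ℤ × ℤ) :=
  ((t.filter fun p => p.1 ≤ s).image fun p => (p.1 - 1, p.2)) ∪
    ((t.filter fun p => p.1 = s).image fun p => (p.1, p.2 + 1)) ∪
    ((t.filter fun p => s ≤ p.1).image fun p => (p.1 + 1, p.2))

/-- Spread of a set of tiles at column `s`. -/
def spreadTiles (s : ℤ) (ts : Finset (Finset (ℤ × ℤ))) : Finset (Finset (ℤ × ℤ)) :=
  ts.image (spreadTile s)

/-- Column `c` is eligible for a tiling with upper-boundary height function `h` and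
tile set `ts`: the upper boundary has an up step ending at column `c`, and its point at
column `c` is not the top corner of a one-box tile. -/
def EligibleCol (h : ℤ → ℤ) (ts : Finset (Finset (ℤ × ℤ))) (c : ℤ) : Prop :=
  h c = h (c - 1) + 1 ∧ ({(c, h c - 2)} : Finset (ℤ × ℤ)) ∉ ts

/-- `T'` is the result of the strip-grow map applied to `(T, s)`: spread `T` at `s` and
add a one-box tile on each up step of the (spread) upper boundary starting at a column
`≥ s` (i.e. strictly to the right of column `s`). -/
def StripGrowRel {n : ℕ} (T : DyckTiling n) (s : ℤ) (T' : DyckTiling (n + 1)) : Prop :=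
  (∀ x : ℤ, T'.lower.ht x = spreadHt T.lower s x) ∧
  (∀ x : ℤ, T'.upper.ht x =
    if s ≤ x ∧ spreadHt T.upper s (x + 1) = spreadHt T.upper s x + 1 then
      spreadHt T.upper s x + 2
    else spreadHt T.upper s x) ∧
  T'.tiles = spreadTiles s T.tiles ∪
    ((Finset.Icc s (n : ℤ)).filter fun x =>
        spreadHt T.upper s (x + 1) = spreadHt T.upper s x + 1).image
      (fun x => ({(x, spreadHt T.upper s x)} : Finset (ℤ × ℤ)))

/-- `T'` is the result of the ribbon-grow map applied to `(T, s)`: spread `T` at `s`,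
and if the special column `Q` of the spread tiling is strictly right of `s`, add a
ribbon of one-box tiles at all columns strictly between `s` and `Q`. -/
def RibbonGrowRel {n : ℕ} (T : DyckTiling n) (s : ℤ) (T' : DyckTiling (n + 1)) : Prop :=
  (∀ x : ℤ, T'.lower.ht x = spreadHt T.lower s x) ∧
  ∃ Q : ℤ,
    EligibleCol (spreadHt T.upper s) (spreadTiles s T.tiles) Q ∧
    (∀ c : ℤ, EligibleCol (spreadHt T.upper s) (spreadTiles s T.tiles) c → c ≤ Q) ∧
    (∀ x : ℤ, T'.upper.ht x =
      if s < x ∧ x < Q then spreadHt T.upper s x + 2 else spreadHt T.upper s x) ∧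
    T'.tiles = spreadTiles s T.tiles ∪
      (Finset.Ioo s Q).image (fun x => ({(x, spreadHt T.upper s x)} : Finset (ℤ × ℤ)))

/-- `s` is the special column of `T`: its rightmost eligible column. -/
def SpecialCol {n : ℕ} (T : DyckTiling n) (s : ℤ) : Prop :=
  EligibleCol T.upper.ht T.tiles s ∧ ∀ c : ℤ, EligibleCol T.upper.ht T.tiles c → c ≤ s

/-- In the strip-shrink map applied to `T'` with special column `s`, a one-box tile is
removed at column `x`: `x` is right of `s` and there is a one-box tile there that is
part of an up step of the upper boundary. -/
def StripRemovedAt {n : ℕ} (T' : DyckTiling n) (s x : ℤ) : Prop :=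
  s < x ∧ T'.upper.ht x = T'.upper.ht (x - 1) + 1 ∧
    ({(x, T'.upper.ht x - 2)} : Finset (ℤ × ℤ)) ∈ T'.tiles

instance {n : ℕ} (T' : DyckTiling n) (s x : ℤ) : Decidable (StripRemovedAt T' s x) := by
  unfold StripRemovedAt; infer_instance

/-- `(T, s)` is the result of the strip-shrink map applied to `T'`: `s` is the special
column of `T'`; all one-box tiles right of `s` lying on up steps of the upper boundary
are removed; and the result is the spread of `T` at `s`. -/
def StripShrinkRel {n : ℕ} (T' : DyckTiling (n + 1)) (T : DyckTiling n) (s : ℤ) : Prop :=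
  SpecialCol T' s ∧
  (∀ x : ℤ, spreadHt T.lower s x = T'.lower.ht x) ∧
  (∀ x : ℤ, spreadHt T.upper s x =
    if StripRemovedAt T' s x then T'.upper.ht x - 2 else T'.upper.ht x) ∧
  spreadTiles s T.tiles =
    T'.tiles \ (((Finset.Ioc s ((n : ℤ) + 1)).filter fun x => StripRemovedAt T' s x).image
      fun x => ({(x, T'.upper.ht x - 2)} : Finset (ℤ × ℤ)))

/-- `(T, s)` is the result of the ribbon-shrink map applied to `T'`: `s` is the special
column of `T'`; the maximal run of topmost one-box tiles in columns `s+1, s+2, …` is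
removed; and the result is the spread of `T` at `s`. -/
def RibbonShrinkRel {n : ℕ} (T' : DyckTiling (n + 1)) (T : DyckTiling n) (s : ℤ) : Prop :=
  SpecialCol T' s ∧
  ∃ r : ℤ, s < r ∧
    (∀ x : ℤ, s < x → x < r → ({(x, T'.upper.ht x - 2)} : Finset (ℤ × ℤ)) ∈ T'.tiles) ∧
    ({(r, T'.upper.ht r - 2)} : Finset (ℤ × ℤ)) ∉ T'.tiles ∧
    (∀ x : ℤ, spreadHt T.lower s x = T'.lower.ht x) ∧
    (∀ x : ℤ, spreadHt T.upper s x =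
      if s < x ∧ x < r then T'.upper.ht x - 2 else T'.upper.ht x) ∧
    spreadTiles s T.tiles =
      T'.tiles \ ((Finset.Ioo s r).image fun x => ({(x, T'.upper.ht x - 2)} : Finset (ℤ × ℤ)))

/-- `IsDTS n p T`: `T` is the Dyck tiling `DTS(p_1, …, p_n)` (indices 0-based, so the
growth column for step `i` is `p i - i`). -/
inductive IsDTS : (n : ℕ) → (Fin n → ℕ) → DyckTiling n → Prop where
  | nil (p : Fin 0 → ℕ) (T : DyckTiling 0) : IsDTS 0 p T
  | cons (n : ℕ) (p : Fin (n + 1) → ℕ) (T : DyckTiling n) (T' : DyckTiling (n + 1)) :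
      IsDTS n (fun i => p i.castSucc) T →
      StripGrowRel T ((p (Fin.last n) : ℤ) - n) T' → IsDTS (n + 1) p T'

/-- `IsDTR n p T`: `T` is the Dyck tiling `DTR(p_1, …, p_n)`. -/
inductive IsDTR : (n : ℕ) → (Fin n → ℕ) → DyckTiling n → Prop where
  | nil (p : Fin 0 → ℕ) (T : DyckTiling 0) : IsDTR 0 p T
  | cons (n : ℕ) (p : Fin (n + 1) → ℕ) (T : DyckTiling n) (T' : DyckTiling (n + 1)) :
      IsDTR n (fun i => p i.castSucc) T →
      RibbonGrowRel T ((p (Fin.last n) : ℤ) - n) T' → IsDTR (n + 1) p T'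

/-- `T = DTS(λ, σ)`. -/
def IsDTSof {n : ℕ} (lam : DyckPath n) (σ : Equiv.Perm (Fin n)) (T : DyckTiling n) : Prop :=
  ∃ C : ChordLabeling lam, IsStandardization C.l σ ∧ IsDTS n (seqOf C) T

/-- `T = DTR(λ, σ)`. -/
def IsDTRof {n : ℕ} (lam : DyckPath n) (σ : Equiv.Perm (Fin n)) (T : DyckTiling n) : Prop :=
  ∃ C : ChordLabeling lam, IsStandardization C.l σ ∧ IsDTR n (seqOf C) T

/-- Increment `a` if it exceeds `p`. -/
def bump (p a : ℕ) : ℕ := if p < a then a + 1 else a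

/-- The perfect matching `match(p_1, …, p_n)` of `{1, …, 2n}`. -/
def matchSeq : (n : ℕ) → (Fin n → ℕ) → Finset (ℕ × ℕ)
  | 0, _ => ∅
  | n + 1, p =>
    ((matchSeq n fun i => p i.castSucc).image fun q =>
      (bump (p (Fin.last n)) q.1, bump (p (Fin.last n)) q.2)) ∪
      {(p (Fin.last n) + 1, 2 * (n + 1))}

/-- The number of nestings of a matching: pairs `(a,b)`, `(c,d)` with `c < a < b < d`. -/
def nestings (M : Finset (ℕ × ℕ)) : ℕ :=
  ((M ×ˢ M).filter fun q => q.2.1 < q.1.1 ∧ q.1.1 < q.1.2 ∧ q.1.2 < q.2.2).card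

/-- `w` is the min-word of `M`: the list of the smaller elements of the pairs of `M`,
sorted by the larger elements. -/
def IsMinWord (n : ℕ) (M : Finset (ℕ × ℕ)) (w : Fin n → ℕ) : Prop :=
  ∃ b : Fin n → ℕ, StrictMono b ∧ (∀ i, w i < b i) ∧
    M = Finset.univ.image fun i => (w i, b i)

/-- The number of tiles of `T` containing boxes over both endpoint columns of the
chord with endpoints at step positions `p < q`. -/
def chordTileCount {n : ℕ} (T : DyckTiling n) (p q : ℕ) : ℕ :=
  (T.tiles.filter fun t =>
    (∃ c ∈ t, (c : ℤ × ℤ).1 = (p : ℤ) + 1 - n) ∧ (∃ c ∈ t, (c : ℤ × ℤ).1 = (q : ℤ) - n)).card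

/-- A Dyck tableau of order `n` over the zigzag path `Z` of order `n+1`: a skew shape
`Z/μ` with `n` dots, one in each column of the skew shape through a valley of `Z`. -/
structure DyckTableau (n : ℕ) (Z : DyckPath (n + 1)) where
  upper : DyckPath (n + 1)
  below : ∀ x : ℤ, Z.ht x ≤ upper.ht x
  dots : Finset (ℤ × ℤ)
  sub : dots ⊆ skewCells Z upper
  card_dots : dots.card = n
  valley : ∀ x : ℤ, Z.ht (x - 1) = Z.ht x + 1 → Z.ht (x + 1) = Z.ht x + 1 →
    (dots.filter fun c => c.1 = x).card = 1

/-- The `q`-integer `[m]_q = 1 + q + ⋯ + q^(m-1)` as a polynomial. -/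
def qint (m : ℕ) : Polynomial ℤ := ∑ i ∈ Finset.range m, Polynomial.X ^ i

/-- The `q`-factorial `[n]_q!`. -/
def qfact (n : ℕ) : Polynomial ℤ := ∏ i ∈ Finset.range n, qint (i + 1)

/-!
Spreading at column `s` maps the cover-inclusive tilings of order `n` bijectively onto those of
order `n + 1` that have a big peak in column `s`, a peak that is not the top corner of a one-box
tile: cover-inclusiveness forces every tile meeting column `s` to bend at `s` as the big peak does,
so the three columns around `s` can be merged again. Adding the strip or the ribbon of boxes then
maps the tilings with a big peak in column `s` bijectively onto those with special column `s`.
A tiling of positive order has exactly one special column, so each growth map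
`(s, T) ↦ T'` is a bijection from pairs onto tilings of order `n + 1`, and `DTS` and `DTR` are
iterations of such bijections.
-/

section Heights

/-- The height reached by a word of up steps (`true`) and down steps (`false`) after its first
`k` letters. -/
def wordHt {m : ℕ} (w : Fin m → Bool) (k : ℤ) : ℤ :=
  ∑ i ∈ {i : Fin m | ((i : ℕ) : ℤ) < k}, if w i = true then 1 else -1

lemma wordHt_eq_card_sub_card {m : ℕ} (w : Fin m → Bool) (k : ℤ) :
    wordHt w k = (#{i : Fin m | ((i : ℕ) : ℤ) < k ∧ w i = true} : ℤ) -
      #{i : Fin m | ((i : ℕ) : ℤ) < k ∧ w i = false} := by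
  simp [wordHt, sum_ite, filter_filter, sub_eq_add_neg]

lemma wordHt_of_nonpos {m : ℕ} (w : Fin m → Bool) {k : ℤ} (hk : k ≤ 0) : wordHt w k = 0 := by
  rw [wordHt, filter_false_of_mem fun i _ => by omega, sum_empty]

lemma wordHt_of_le {m : ℕ} (w : Fin m → Bool) {k : ℤ} (hk : m ≤ k) :
    wordHt w k = 2 * (#{i | w i = true} : ℤ) - m := by
  have hcard := card_filter_add_card_filter_not (s := (univ : Finset (Fin m))) (w · = true)
  rw [card_univ, Fintype.card_fin] at hcard
  rw [wordHt, filter_true_of_mem fun i _ => by omega, sum_ite]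
  simp only [sum_const, nsmul_eq_mul]
  omega

lemma wordHt_succ {m : ℕ} (w : Fin m → Bool) (i : Fin m) :
    wordHt w (i + 1) = wordHt w i + if w i = true then 1 else -1 := by
  have hinsert : ({j : Fin m | (j : ℤ) < i + 1} : Finset (Fin m)) =
      insert i ({j : Fin m | (j : ℤ) < i} : Finset (Fin m)) := by
    ext j
    simp only [mem_filter_univ, mem_insert, Fin.ext_iff]
    omega
  rw [wordHt, hinsert, sum_insert (by simp), add_comm, wordHt]

/-- On `[a, b]` the function `f` traces a lattice path with `±1` steps whose two ends have the
same height and are lowest. Dyck paths and Dyck tiles are both of this form. -/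
structure IsDyckArc (a b : ℤ) (f : ℤ → ℤ) : Prop where
  le : a ≤ b
  step : ∀ x, a ≤ x → x < b → f (x + 1) = f x + 1 ∨ f (x + 1) = f x - 1
  ends : f b = f a
  min : ∀ x, a ≤ x → x ≤ b → f a ≤ f x

namespace IsDyckArc

variable {a b x : ℤ} {f : ℤ → ℤ}

lemma parity (hf : IsDyckArc a b f) (hax : a ≤ x) (hxb : x ≤ b) :
    (f x - f a - (x - a)) % 2 = 0 := by
  induction x, hax using Int.leInduction with
  | base => omega
  | succ x hx ih =>
    have := ih (by omega)
    have := hf.step x hx (by omega)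
    omega

lemma le_left_add (hf : IsDyckArc a b f) (hax : a ≤ x) (hxb : x ≤ b) : f x ≤ f a + (x - a) := by
  induction x, hax using Int.leInduction with
  | base => omega
  | succ x hx ih =>
    have := ih (by omega)
    have := hf.step x hx (by omega)
    omega

lemma le_right_add (hf : IsDyckArc a b f) (hax : a ≤ x) (hxb : x ≤ b) : f x ≤ f b + (b - x) := by
  induction x, hxb using Int.leInductionDown with
  | base => omega
  | pred x hx ih =>
    have := ih (by omega)
    have hstep := hf.step (x - 1) hax (by omega)
    rw [sub_add_cancel] at hstep
    omega

end IsDyckArc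

/-- The function `h` is the height function of a Dyck path of order `n`, extended by zero beyond
the columns `-n, …, n`. -/
structure IsDyckHt (n : ℕ) (h : ℤ → ℤ) : Prop where
  eq_zero : ∀ x : ℤ, x ≤ -n ∨ n ≤ x → h x = 0
  nonneg : ∀ x, 0 ≤ h x
  step : ∀ x : ℤ, -n ≤ x → x < n → h (x + 1) = h x + 1 ∨ h (x + 1) = h x - 1

namespace IsDyckHt

variable {n : ℕ} {h : ℤ → ℤ} {x : ℤ}

lemma isDyckArc (hh : IsDyckHt n h) : IsDyckArc (-n) n h where
  le := by omega
  step := hh.step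
  ends := by rw [hh.eq_zero _ (Or.inr le_rfl), hh.eq_zero _ (Or.inl le_rfl)]
  min x _ _ := by rw [hh.eq_zero _ (Or.inl le_rfl)]; exact hh.nonneg x

lemma mem_Ioo_of_pos (hh : IsDyckHt n h) (hx : 0 < h x) : x ∈ Ioo (-(n : ℤ)) n := by
  by_contra hc
  rw [mem_Ioo] at hc
  exact hx.ne' (hh.eq_zero x (by omega))

lemma parity (hh : IsDyckHt n h) (hx : x ∈ Icc (-(n : ℤ)) n) : (h x - x - n) % 2 = 0 := by
  rw [mem_Icc] at hx
  have := hh.isDyckArc.parity hx.1 hx.2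
  have := hh.eq_zero (-n) (Or.inl le_rfl)
  omega

lemma le_order (hh : IsDyckHt n h) (x : ℤ) : h x ≤ n := by
  rcases le_or_gt (h x) 0 with hx | hx
  · omega
  have hx := mem_Ioo.1 (hh.mem_Ioo_of_pos hx)
  have := hh.isDyckArc.le_left_add hx.1.le hx.2.le
  have := hh.isDyckArc.le_right_add hx.1.le hx.2.le
  have := hh.eq_zero (-n) (Or.inl le_rfl)
  have := hh.eq_zero n (Or.inr le_rfl)
  omega

end IsDyckHt

lemma IsDyckArc.isDyckHt {n : ℕ} {h : ℤ → ℤ} (hh : IsDyckArc (-n) n h)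
    (hzero : ∀ x : ℤ, x ≤ -n ∨ n ≤ x → h x = 0) : IsDyckHt n h where
  eq_zero := hzero
  nonneg x := by
    by_cases hx : x ≤ -n ∨ n ≤ x
    · exact (hzero x hx).ge
    · have := hh.min x (by omega) (by omega)
      rwa [hzero _ (Or.inl le_rfl)] at this
  step := hh.step

namespace DyckPath

variable {n : ℕ}

lemma ht_eq_wordHt (P : DyckPath n) (x : ℤ) : P.ht x = wordHt P.step (x + n) :=
  (wordHt_eq_card_sub_card P.step (x + n)).symm

lemma ht_succ (P : DyckPath n) (i : Fin (2 * n)) :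
    P.ht (i - n + 1) = P.ht (i - n) + if P.step i = true then 1 else -1 := by
  have hsucc := wordHt_succ P.step i
  rwa [show (i + 1 : ℤ) = i - n + 1 + n by ring, ← ht_eq_wordHt,
    show wordHt P.step i = P.ht (i - n) by rw [ht_eq_wordHt, sub_add_cancel]] at hsucc

lemma ht_eq_zero (P : DyckPath n) {x : ℤ} (hx : x ≤ -n ∨ n ≤ x) : P.ht x = 0 := by
  rw [ht_eq_wordHt]
  rcases hx with hx | hx
  · exact wordHt_of_nonpos _ (by omega)
  · rw [wordHt_of_le _ (by push_cast; omega), P.balanced]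
    push_cast
    ring

lemma isDyckHt_ht (P : DyckPath n) : IsDyckHt n P.ht where
  eq_zero _ := P.ht_eq_zero
  nonneg x := by
    by_cases hx : x ≤ -n ∨ n ≤ x
    · exact (P.ht_eq_zero hx).ge
    · have hk := P.nonneg (x + n).toNat (by omega)
      rw [ht, show x + n = ((x + n).toNat : ℤ) by omega]
      simpa only [Nat.cast_lt, sub_nonneg, Nat.cast_le] using hk
  step x hl hr := by
    obtain ⟨i, rfl⟩ : ∃ i : Fin (2 * n), x = i - n := ⟨⟨(x + n).toNat, by omega⟩, by simp; omega⟩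
    rw [P.ht_succ]
    split_ifs <;> simp [sub_eq_add_neg]

lemma ht_injective : Function.Injective (ht : DyckPath n → ℤ → ℤ) := by
  intro P R h
  have hstep : P.step = R.step := by
    funext i
    have hi := P.ht_succ i
    rw [h, R.ht_succ i] at hi
    cases hP : P.step i <;> cases hR : R.step i <;> simp [hP, hR] at hi ⊢
  cases P; cases R; simpa using hstep

end DyckPath

lemma IsDyckHt.exists_ht_eq {n : ℕ} {h : ℤ → ℤ} (hh : IsDyckHt n h) :
    ∃ P : DyckPath n, P.ht = h := by
  obtain ⟨w, hw⟩ : ∃ w : Fin (2 * n) → Bool, ∀ i, w i = true ↔ h (i - n + 1) = h (i - n) + 1 :=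
    ⟨fun i => h (i - n + 1) = h (i - n) + 1, fun i => decide_eq_true_iff⟩
  have hht : ∀ k : ℕ, k ≤ 2 * n → wordHt w k = h (k - n) := by
    intro k hk
    induction k with
    | zero => rw [wordHt_of_nonpos _ (by simp), hh.eq_zero _ (by simp)]
    | succ k ih =>
      have hsucc := wordHt_succ w ⟨k, by omega⟩
      have hstep := hh.step (k - n) (by omega) (by omega)
      simp only [hw, ih (by omega)] at hsucc
      push_cast
      rw [hsucc, add_sub_right_comm]
      split_ifs with hup <;> omega
  have hbalanced := wordHt_of_le w (k := (2 * n : ℕ)) le_rfl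
  rw [hht _ le_rfl, hh.eq_zero _ (by push_cast; omega)] at hbalanced
  have hnonneg : ∀ k : ℕ, k ≤ 2 * n → 0 ≤ wordHt w k := fun k hk => hht k hk ▸ hh.nonneg _
  simp only [wordHt_eq_card_sub_card, Nat.cast_lt, sub_nonneg, Nat.cast_le] at hnonneg
  let P : DyckPath n := ⟨w, by omega, hnonneg⟩
  refine ⟨P, funext fun x => ?_⟩
  by_cases hx : x ≤ -n ∨ n ≤ x
  · rw [P.isDyckHt_ht.eq_zero x hx, hh.eq_zero x hx]
  · have := hht (x + n).toNat (by omega)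
    rw [Int.toNat_of_nonneg (by omega), add_sub_cancel_right] at this
    rw [← this]
    exact P.ht_eq_wordHt x

end Heights

section Tiles

lemma isDyckTile_iff {t : Finset (ℤ × ℤ)} :
    IsDyckTile t ↔
      ∃ a b f, IsDyckArc a b f ∧ ∀ x y, (x, y) ∈ t ↔ (a ≤ x ∧ x ≤ b) ∧ f x = y := by
  constructor
  · rintro ⟨a, b, f, hab, hstep, hends, hmin, rfl⟩
    refine ⟨a, b, f, ⟨hab, hstep, hends, hmin⟩, fun x y => ?_⟩
    simp only [mem_image, mem_Icc, Prod.mk.injEq]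
    exact ⟨fun ⟨z, hz, hzx, hzy⟩ => hzx ▸ ⟨hz, hzy⟩, fun ⟨hx, hxy⟩ => ⟨x, hx, rfl, hxy⟩⟩
  · rintro ⟨a, b, f, hf, ht⟩
    refine ⟨a, b, f, hf.le, hf.step, hf.ends, hf.min, ?_⟩
    ext ⟨x, y⟩
    simp only [ht, mem_image, mem_Icc, Prod.mk.injEq]
    exact ⟨fun ⟨hx, hxy⟩ => ⟨x, hx, rfl, hxy⟩, fun ⟨z, hz, hzx, hzy⟩ => hzx ▸ ⟨hz, hzy⟩⟩

lemma isDyckTile_singleton (c : ℤ × ℤ) : IsDyckTile {c} :=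
  ⟨c.1, c.1, fun _ => c.2, le_rfl, fun _ _ _ => by omega, rfl, fun _ _ _ => le_rfl, by simp⟩

namespace IsDyckTile

variable {t : Finset (ℤ × ℤ)} {x y z : ℤ}

lemma nonempty (ht : IsDyckTile t) : t.Nonempty := by
  obtain ⟨a, b, f, hf, ht⟩ := isDyckTile_iff.1 ht
  exact ⟨(a, f a), (ht _ _).2 ⟨⟨le_rfl, hf.le⟩, rfl⟩⟩

lemma height_unique (ht : IsDyckTile t) (hy : (x, y) ∈ t) (hz : (x, z) ∈ t) : y = z := by
  obtain ⟨a, b, f, -, ht⟩ := isDyckTile_iff.1 ht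
  exact ((ht _ _).1 hy).2.symm.trans ((ht _ _).1 hz).2

lemma eq_of_mem_succ (ht : IsDyckTile t) (hy : (x, y) ∈ t) (hz : (x + 1, z) ∈ t) :
    z = y + 1 ∨ z = y - 1 := by
  obtain ⟨a, b, f, hf, ht⟩ := isDyckTile_iff.1 ht
  rw [ht] at hy hz
  rw [← hy.2, ← hz.2]
  exact hf.step x hy.1.1 (by omega)

lemma neighbors_mem_of_peak (ht : IsDyckTile t) (hxy : (x, y) ∈ t) (hne : t ≠ {(x, y)})
    (hleft : (x - 1, y + 1) ∉ t) (hright : (x + 1, y + 1) ∉ t) :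
    (x - 1, y - 1) ∈ t ∧ (x + 1, y - 1) ∈ t := by
  obtain ⟨a, b, f, hf, ht⟩ := isDyckTile_iff.1 ht
  simp only [ht] at hxy hleft hright ⊢
  obtain ⟨⟨hax, hxb⟩, rfl⟩ := hxy
  have hne' : a ≠ b := by
    rintro rfl
    refine hne (Finset.ext fun ⟨u, v⟩ => ?_)
    rw [ht, mem_singleton, Prod.mk.injEq]
    constructor
    · rintro ⟨hu, rfl⟩
      obtain rfl : u = x := by omega
      exact ⟨rfl, rfl⟩
    · rintro ⟨rfl, rfl⟩
      exact ⟨⟨hax, hxb⟩, rfl⟩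
  have hstepLeft : a < x → f x = f (x - 1) + 1 ∨ f x = f (x - 1) - 1 := fun h => by
    have := hf.step (x - 1) (by omega) (by omega)
    rwa [sub_add_cancel] at this
  have hends := hf.ends
  have hle := hf.le
  have hlow : a < x := by
    by_contra hx
    obtain rfl : a = x := by omega
    have := hf.step a (by omega) (by omega)
    have := hf.min (a + 1) (by omega) (by omega)
    omega
  have hhigh : x < b := by
    by_contra hx
    obtain rfl : b = x := by omega
    have := hf.min (b - 1) (by omega) (by omega)
    have := hstepLeft hlow
    omega
  have := hstepLeft hlow
  have := hf.step x (by omega) hhigh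
  omega

end IsDyckTile

end Tiles

section Diagrams

/-- Two boundary height functions and a set of tiles, about which nothing is assumed. Spreading,
and adding or removing boxes, are plain functions on diagrams; `IsTiling` singles out the diagrams
of Dyck tilings of order `n`. -/
@[ext]
structure Diagram (n : ℕ) where
  lower : ℤ → ℤ
  upper : ℤ → ℤ
  tiles : Finset (Finset (ℤ × ℤ))

namespace Diagram

variable {n : ℕ} {D : Diagram n} {t u : Finset (ℤ × ℤ)} {x y z : ℤ}

/-- The diagram `D` is the diagram of a Dyck tiling of order `n`. -/
structure IsTiling (D : Diagram n) : Prop where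
  isDyckHt_lower : IsDyckHt n D.lower
  isDyckHt_upper : IsDyckHt n D.upper
  lower_le_upper : ∀ x, D.lower x ≤ D.upper x
  isDyckTile : ∀ t ∈ D.tiles, IsDyckTile t
  eq_of_mem : ∀ t ∈ D.tiles, ∀ u ∈ D.tiles, ∀ c ∈ t, c ∈ u → t = u
  exists_mem_iff : ∀ x z, (∃ t ∈ D.tiles, (x, z) ∈ t) ↔
    D.lower x ≤ z ∧ z + 2 ≤ D.upper x ∧ (z - x - n) % 2 = 0

/-- The analogue of `DyckTiling.CoverInclusive` for diagrams. -/
def CoverInclusive (D : Diagram n) : Prop :=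
  ∀ t ∈ D.tiles, ∀ u ∈ D.tiles,
    (∃ p ∈ t, ∃ q ∈ u, (p : ℤ × ℤ).1 = (q : ℤ × ℤ).1 ∧ (q : ℤ × ℤ).2 < (p : ℤ × ℤ).2) →
    ∀ p ∈ t, ∃ y : ℤ, ((p : ℤ × ℤ).1, y) ∈ u

lemma coverInclusive_iff : D.CoverInclusive ↔ ∀ t ∈ D.tiles, ∀ u ∈ D.tiles, ∀ x y z,
    (x, y) ∈ t → (x, z) ∈ u → z < y → ∀ x' y', (x', y') ∈ t → ∃ z', (x', z') ∈ u := by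
  constructor
  · intro h t ht u hu x y z hy hz hlt x' y' hx'
    exact h t ht u hu ⟨_, hy, _, hz, rfl, hlt⟩ _ hx'
  · rintro h t ht u hu ⟨⟨x, y⟩, hy, ⟨_, z⟩, hz, rfl, hlt⟩ ⟨x', y'⟩ hx'
    exact h t ht u hu x y z hy hz hlt x' y' hx'

namespace IsTiling

lemma bounds_of_mem (hD : D.IsTiling) (ht : t ∈ D.tiles) (hx : (x, z) ∈ t) :
    D.lower x ≤ z ∧ z + 2 ≤ D.upper x :=
  ((hD.exists_mem_iff x z).1 ⟨t, ht, hx⟩).imp_right And.left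

lemma exists_mem (hD : D.IsTiling) (hl : D.lower x ≤ z) (hu : z + 2 ≤ D.upper x)
    (hpar : (D.upper x - z) % 2 = 0) : ∃ t ∈ D.tiles, (x, z) ∈ t := by
  have hx := hD.isDyckHt_upper.mem_Ioo_of_pos
    (x := x) (by linarith [hD.isDyckHt_lower.nonneg x])
  have := hD.isDyckHt_upper.parity (Ioo_subset_Icc_self hx)
  exact (hD.exists_mem_iff x z).2 ⟨hl, hu, by omega⟩

end IsTiling

end Diagram

lemma mem_skewCells {n : ℕ} {P R : DyckPath n} {x z : ℤ} : (x, z) ∈ skewCells P R ↔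
    P.ht x ≤ z ∧ z + 2 ≤ R.ht x ∧ (z - x - n) % 2 = 0 := by
  simp only [skewCells, mem_filter, mem_product, mem_Icc, and_iff_right_iff_imp]
  rintro ⟨hl, hu, -⟩
  have hP := P.isDyckHt_ht.nonneg x
  have hR := R.isDyckHt_ht.le_order x
  have hx := mem_Ioo.1 (R.isDyckHt_ht.mem_Ioo_of_pos (x := x) (by omega))
  omega

namespace DyckTiling

variable {n : ℕ}

/-- The diagram of a Dyck tiling. -/
def diagram (T : DyckTiling n) : Diagram n := ⟨T.lower.ht, T.upper.ht, T.tiles⟩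

lemma diagram_injective : Function.Injective (diagram : DyckTiling n → Diagram n) := by
  intro T R h
  have hlower : T.lower = R.lower := DyckPath.ht_injective (congrArg Diagram.lower h)
  have hupper : T.upper = R.upper := DyckPath.ht_injective (congrArg Diagram.upper h)
  have htiles : T.tiles = R.tiles := congrArg Diagram.tiles h
  cases T
  cases R
  congr

lemma isTiling_diagram (T : DyckTiling n) : T.diagram.IsTiling where
  isDyckHt_lower := T.lower.isDyckHt_ht
  isDyckHt_upper := T.upper.isDyckHt_ht
  lower_le_upper := T.below
  isDyckTile := T.isDyck
  eq_of_mem t ht u hu _ hct hcu := by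
    by_contra hne
    exact disjoint_left.1 (T.disj t ht u hu hne) hct hcu
  exists_mem_iff x z := by
    rw [diagram, ← mem_skewCells, ← T.cover]
    simp

end DyckTiling

lemma Diagram.IsTiling.exists_diagram_eq {n : ℕ} {D : Diagram n} (hD : D.IsTiling) :
    ∃ T : DyckTiling n, T.diagram = D := by
  obtain ⟨P, hP⟩ := hD.isDyckHt_lower.exists_ht_eq
  obtain ⟨R, hR⟩ := hD.isDyckHt_upper.exists_ht_eq
  refine ⟨⟨P, R, fun x => ?_, D.tiles, hD.isDyckTile, fun t ht u hu hne => ?_, ?_⟩, ?_⟩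
  · simpa only [hP, hR] using hD.lower_le_upper x
  · exact disjoint_left.2 fun c hct hcu => hne (hD.eq_of_mem t ht u hu c hct hcu)
  · ext ⟨x, z⟩
    rw [mem_skewCells, hP, hR, ← hD.exists_mem_iff]
    simp
  · exact Diagram.ext hP hR rfl

end Diagrams

section Layers

namespace Diagram

variable {n : ℕ} {D : Diagram n} {A : Finset ℤ} {x : ℤ}

/-- The topmost box of column `x` is a tile of its own. -/
def HasTopBox (D : Diagram n) (x : ℤ) : Prop :=
  ({(x, D.upper x - 2)} : Finset (ℤ × ℤ)) ∈ D.tiles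

/-- Adds a one-box tile on top of each column of `A`. -/
def addLayer (D : Diagram n) (A : Finset ℤ) : Diagram n where
  lower := D.lower
  upper x := if x ∈ A then D.upper x + 2 else D.upper x
  tiles := D.tiles ∪ A.image fun x => {(x, D.upper x)}

/-- Removes the one-box tile on top of each column of `A`. -/
def removeLayer (D : Diagram n) (A : Finset ℤ) : Diagram n where
  lower := D.lower
  upper x := if x ∈ A then D.upper x - 2 else D.upper x
  tiles := D.tiles \ A.image fun x => {(x, D.upper x - 2)}

lemma addLayer_upper_of_mem (hx : x ∈ A) : (D.addLayer A).upper x = D.upper x + 2 := if_pos hx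

lemma addLayer_upper_of_notMem (hx : x ∉ A) : (D.addLayer A).upper x = D.upper x := if_neg hx

lemma removeLayer_upper_of_mem (hx : x ∈ A) : (D.removeLayer A).upper x = D.upper x - 2 :=
  if_pos hx

lemma removeLayer_upper_of_notMem (hx : x ∉ A) : (D.removeLayer A).upper x = D.upper x :=
  if_neg hx

lemma mem_tiles_addLayer {t : Finset (ℤ × ℤ)} :
    t ∈ (D.addLayer A).tiles ↔ t ∈ D.tiles ∨ ∃ x ∈ A, {(x, D.upper x)} = t := by
  simp [addLayer]

lemma exists_mem_tiles_addLayer {z : ℤ} : (∃ t ∈ (D.addLayer A).tiles, (x, z) ∈ t) ↔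
    (∃ t ∈ D.tiles, (x, z) ∈ t) ∨ x ∈ A ∧ z = D.upper x := by
  simp only [mem_tiles_addLayer, or_and_right, exists_or]
  refine or_congr_right ⟨?_, fun ⟨hx, hz⟩ => ⟨_, ⟨x, hx, rfl⟩, by rw [hz, mem_singleton]⟩⟩
  rintro ⟨_, ⟨y, hy, rfl⟩, hxz⟩
  obtain ⟨rfl, rfl⟩ := Prod.mk_inj.1 (mem_singleton.1 hxz)
  exact ⟨hy, rfl⟩

lemma addLayer_removeLayer (hA : ∀ x ∈ A, D.HasTopBox x) : (D.removeLayer A).addLayer A = D := by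
  ext x
  · rfl
  · by_cases hx : x ∈ A <;> simp [addLayer, removeLayer, hx]
  · have himage : (A.image fun x => ({(x, (D.removeLayer A).upper x)} : Finset (ℤ × ℤ))) =
        A.image fun x => {(x, D.upper x - 2)} :=
      image_congr fun x hx => by rw [removeLayer_upper_of_mem hx]
    rw [addLayer, himage, removeLayer, sdiff_union_of_subset]
    exact image_subset_iff.2 hA

lemma hasTopBox_addLayer (hx : x ∈ A) : (D.addLayer A).HasTopBox x :=
  mem_tiles_addLayer.2 (Or.inr ⟨x, hx, by rw [addLayer_upper_of_mem hx, add_sub_cancel_right]⟩)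

lemma hasTopBox_addLayer_iff (hx : x ∉ A) : (D.addLayer A).HasTopBox x ↔ D.HasTopBox x := by
  rw [HasTopBox, mem_tiles_addLayer, addLayer_upper_of_notMem hx, HasTopBox, or_iff_left]
  rintro ⟨y, hy, hyx⟩
  obtain rfl : y = x := congrArg Prod.fst (singleton_injective hyx)
  exact hx hy

namespace IsTiling

lemma singleton_upper_notMem (hD : D.IsTiling) (x : ℤ) :
    ({(x, D.upper x)} : Finset (ℤ × ℤ)) ∉ D.tiles := fun hx => by
  have := hD.bounds_of_mem hx (mem_singleton_self _)
  omega

lemma lower_le_of_hasTopBox (hD : D.IsTiling) (hx : D.HasTopBox x) :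
    D.lower x ≤ D.upper x - 2 :=
  (hD.bounds_of_mem hx (mem_singleton_self _)).1

lemma mem_Ioo_of_hasTopBox (hD : D.IsTiling) (hx : D.HasTopBox x) : x ∈ Ioo (-(n : ℤ)) n :=
  hD.isDyckHt_upper.mem_Ioo_of_pos
    (by linarith [hD.lower_le_of_hasTopBox hx, hD.isDyckHt_lower.nonneg x])

lemma removeLayer_addLayer (hD : D.IsTiling) : (D.addLayer A).removeLayer A = D := by
  ext x
  · rfl
  · by_cases hx : x ∈ A <;> simp [addLayer, removeLayer, hx]
  · have himage : (A.image fun x => ({(x, (D.addLayer A).upper x - 2)} : Finset (ℤ × ℤ))) =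
        A.image fun x => {(x, D.upper x)} :=
      image_congr fun x hx => by rw [addLayer_upper_of_mem hx, add_sub_cancel_right]
    rw [removeLayer, himage, addLayer, union_sdiff_cancel_right]
    refine disjoint_right.2 fun t ht => ?_
    obtain ⟨y, -, rfl⟩ := mem_image.1 ht
    exact hD.singleton_upper_notMem y

lemma addLayer (hD : D.IsTiling) (hupper : IsDyckHt n (D.addLayer A).upper) :
    (D.addLayer A).IsTiling where
  isDyckHt_lower := hD.isDyckHt_lower
  isDyckHt_upper := hupper
  lower_le_upper x := by
    have := hD.lower_le_upper x
    simp only [Diagram.addLayer]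
    split_ifs <;> omega
  isDyckTile t ht := by
    obtain ht | ⟨x, -, rfl⟩ := mem_tiles_addLayer.1 ht
    exacts [hD.isDyckTile t ht, isDyckTile_singleton _]
  eq_of_mem t ht u hu c hct hcu := by
    obtain ht | ⟨x, -, rfl⟩ := mem_tiles_addLayer.1 ht <;>
      obtain hu | ⟨y, -, rfl⟩ := mem_tiles_addLayer.1 hu
    · exact hD.eq_of_mem t ht u hu c hct hcu
    · obtain rfl := mem_singleton.1 hcu
      linarith [(hD.bounds_of_mem ht hct).2]
    · obtain rfl := mem_singleton.1 hct
      linarith [(hD.bounds_of_mem hu hcu).2]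
    · rw [mem_singleton] at hct hcu
      rw [← hct, ← hcu]
  exists_mem_iff x z := by
    rw [exists_mem_tiles_addLayer, hD.exists_mem_iff]
    by_cases hx : x ∈ A
    · have := hD.lower_le_upper x
      have hpos : 0 < (D.addLayer A).upper x := by
        rw [addLayer_upper_of_mem hx]
        linarith [hD.isDyckHt_upper.nonneg x]
      have := hD.isDyckHt_upper.parity (Ioo_subset_Icc_self (hupper.mem_Ioo_of_pos hpos))
      simp only [Diagram.addLayer, hx, if_true, true_and]
      omega
    · simp [Diagram.addLayer, hx]

lemma exists_mem_tiles_removeLayer (hD : D.IsTiling) (hA : ∀ x ∈ A, D.HasTopBox x) {z : ℤ} :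
    (∃ t ∈ (D.removeLayer A).tiles, (x, z) ∈ t) ↔
      (∃ t ∈ D.tiles, (x, z) ∈ t) ∧ ¬(x ∈ A ∧ z = D.upper x - 2) := by
  constructor
  · rintro ⟨t, ht, hxz⟩
    refine ⟨⟨t, (mem_sdiff.1 ht).1, hxz⟩, ?_⟩
    rintro ⟨hx, rfl⟩
    refine (mem_sdiff.1 ht).2 (mem_image.2 ⟨x, hx, ?_⟩)
    exact hD.eq_of_mem _ (hA x hx) t (mem_sdiff.1 ht).1 _ (mem_singleton_self _) hxz
  · rintro ⟨⟨t, ht, hxz⟩, hnot⟩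
    refine ⟨t, mem_sdiff.2 ⟨ht, fun hmem => hnot ?_⟩, hxz⟩
    obtain ⟨y, hy, rfl⟩ := mem_image.1 hmem
    obtain ⟨rfl, rfl⟩ := Prod.mk_inj.1 (mem_singleton.1 hxz)
    exact ⟨hy, rfl⟩

lemma removeLayer (hD : D.IsTiling) (hA : ∀ x ∈ A, D.HasTopBox x)
    (hupper : IsDyckHt n (D.removeLayer A).upper) : (D.removeLayer A).IsTiling where
  isDyckHt_lower := hD.isDyckHt_lower
  isDyckHt_upper := hupper
  lower_le_upper x := by
    by_cases hx : x ∈ A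
    · rw [removeLayer_upper_of_mem hx]
      exact hD.lower_le_of_hasTopBox (hA x hx)
    · rw [removeLayer_upper_of_notMem hx]
      exact hD.lower_le_upper x
  isDyckTile t ht := hD.isDyckTile t (mem_sdiff.1 ht).1
  eq_of_mem t ht u hu := hD.eq_of_mem t (mem_sdiff.1 ht).1 u (mem_sdiff.1 hu).1
  exists_mem_iff x z := by
    rw [hD.exists_mem_tiles_removeLayer hA, hD.exists_mem_iff]
    by_cases hx : x ∈ A
    · have := hD.lower_le_of_hasTopBox (hA x hx)
      have := hD.isDyckHt_upper.parity (Ioo_subset_Icc_self (hD.mem_Ioo_of_hasTopBox (hA x hx)))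
      simp only [Diagram.removeLayer, hx, if_true, true_and]
      omega
    · simp [Diagram.removeLayer, hx]

lemma coverInclusive_addLayer_iff (hD : D.IsTiling) :
    (D.addLayer A).CoverInclusive ↔ D.CoverInclusive := by
  rw [coverInclusive_iff, coverInclusive_iff]
  constructor
  · exact fun h t ht u hu => h t (mem_tiles_addLayer.2 (.inl ht)) u (mem_tiles_addLayer.2 (.inl hu))
  intro h t ht u hu x y z hy hz hlt x' y' hx'
  obtain hu | ⟨v, -, rfl⟩ := mem_tiles_addLayer.1 hu
  · obtain ht | ⟨w, -, rfl⟩ := mem_tiles_addLayer.1 ht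
    · exact h t ht u hu x y z hy hz hlt x' y' hx'
    · obtain ⟨rfl, rfl⟩ := Prod.mk_inj.1 (mem_singleton.1 hy)
      obtain ⟨rfl, rfl⟩ := Prod.mk_inj.1 (mem_singleton.1 hx')
      exact ⟨z, hz⟩
  · obtain ⟨rfl, rfl⟩ := Prod.mk_inj.1 (mem_singleton.1 hz)
    obtain ht | ⟨w, -, rfl⟩ := mem_tiles_addLayer.1 ht
    · linarith [(hD.bounds_of_mem ht hy).2]
    · obtain ⟨rfl, rfl⟩ := Prod.mk_inj.1 (mem_singleton.1 hy)
      exact absurd hlt (lt_irrefl _)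

end IsTiling

end Diagram

end Layers

section Spread

/-- The column from which the spread at `s` moves points to column `x`. -/
def pullCol (s x : ℤ) : ℤ := if x < s then x + 1 else if x = s then s else x - 1

/-- The leftmost column to which the spread at `s` moves points of column `x`. -/
def pushLeft (s x : ℤ) : ℤ := if x ≤ s then x - 1 else x + 1

/-- The rightmost column to which the spread at `s` moves points of column `x`. -/
def pushRight (s x : ℤ) : ℤ := if x < s then x - 1 else x + 1

/-- The point which the spread at `s` moves to `c`. -/
def pullPt (s : ℤ) (c : ℤ × ℤ) : ℤ × ℤ := (pullCol s c.1, if c.1 = s then c.2 - 1 else c.2)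

/-- The spread at column `s` of a height function; compare `spreadHt`. -/
def spreadFn (s : ℤ) (f : ℤ → ℤ) (x : ℤ) : ℤ :=
  if x < s then f (x + 1) else if x = s then f s + 1 else f (x - 1)

variable {s x z : ℤ} {f : ℤ → ℤ}

lemma pullCol_pushLeft (s x : ℤ) : pullCol s (pushLeft s x) = x := by
  unfold pullCol pushLeft
  split_ifs <;> omega

lemma pushLeft_ne (s x : ℤ) : pushLeft s x ≠ s := by
  unfold pushLeft
  split_ifs <;> omega

lemma pullPt_pushLeft (s x z : ℤ) : pullPt s (pushLeft s x, z) = (x, z) := by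
  simp [pullPt, pullCol_pushLeft, pushLeft_ne]

lemma spreadFn_of_lt (h : x < s) : spreadFn s f x = f (x + 1) := if_pos h

lemma spreadFn_of_gt (h : s < x) : spreadFn s f x = f (x - 1) := by
  rw [spreadFn, if_neg h.not_gt, if_neg h.ne']

lemma spreadFn_pushLeft (s : ℤ) (f : ℤ → ℤ) (x : ℤ) : spreadFn s f (pushLeft s x) = f x := by
  unfold pushLeft
  split_ifs with h
  · rw [spreadFn_of_lt (by omega), sub_add_cancel]
  · rw [spreadFn_of_gt (by omega), add_sub_cancel_right]

lemma spreadFn_pushRight (s : ℤ) (f : ℤ → ℤ) (x : ℤ) : spreadFn s f (pushRight s x) = f x := by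
  unfold pushRight
  split_ifs with h
  · rw [spreadFn_of_lt (by omega), sub_add_cancel]
  · rw [spreadFn_of_gt (by omega), add_sub_cancel_right]

lemma spreadFn_injective (s : ℤ) : Function.Injective (spreadFn s) := fun f g h =>
  funext fun x => by rw [← spreadFn_pushLeft s f, h, spreadFn_pushLeft]

lemma spreadFn_comp_pushLeft (hleft : f (s - 1) = f s - 1) (hright : f (s + 1) = f s - 1) :
    spreadFn s (f ∘ pushLeft s) = f := by
  funext x
  simp only [spreadFn, Function.comp_apply, pushLeft]
  grind

lemma IsDyckArc.congr {a b : ℤ} {g : ℤ → ℤ} (hf : IsDyckArc a b f)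
    (h : ∀ x, a ≤ x → x ≤ b → f x = g x) : IsDyckArc a b g where
  le := hf.le
  step x hax hxb := by
    rw [← h x hax hxb.le, ← h (x + 1) (by omega) hxb]
    exact hf.step x hax hxb
  ends := by
    rw [← h a le_rfl hf.le, ← h b hf.le le_rfl]
    exact hf.ends
  min x hax hxb := by
    rw [← h a le_rfl hf.le, ← h x hax hxb]
    exact hf.min x hax hxb

lemma isDyckArc_spreadFn_iff {a b : ℤ} :
    IsDyckArc (pushLeft s a) (pushRight s b) (spreadFn s f) ↔ IsDyckArc a b f := by
  constructor <;> intro h <;> have hle := h.le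
  · refine ⟨by grind [pushLeft, pushRight], fun x hax hxb => ?_, ?_, fun x hax hxb => ?_⟩
    · have hstepLeft := h.step (x - 1)
      have hstepRight := h.step (x + 1)
      grind [pushLeft, pushRight, spreadFn]
    · simpa only [spreadFn_pushLeft, spreadFn_pushRight] using h.ends
    · have := h.min (pushLeft s x) (by grind [pushLeft]) (by grind [pushLeft, pushRight])
      simpa only [spreadFn_pushLeft] using this
  · refine ⟨by grind [pushLeft, pushRight], fun x hax hxb => ?_, ?_, fun x hax hxb => ?_⟩
    · have hstepLeft := h.step (x + 1)
      have hstepRight := h.step (x - 1)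
      grind [pushLeft, pushRight, spreadFn]
    · simpa only [spreadFn_pushLeft, spreadFn_pushRight] using h.ends
    · have := h.min (pullCol s x) (by grind [pushLeft, pullCol]) (by grind [pushRight, pullCol])
      grind [pullCol, spreadFn, spreadFn_pushLeft]

lemma isDyckHt_spreadFn_iff {n : ℕ} (hs : s ∈ Icc (-(n : ℤ)) n) :
    IsDyckHt (n + 1) (spreadFn s f) ↔ IsDyckHt n f := by
  rw [mem_Icc] at hs
  have harc := isDyckArc_spreadFn_iff (s := s) (f := f) (a := -(n : ℤ)) (b := n)
  rw [show pushLeft s (-n) = -((n + 1 : ℕ) : ℤ) by grind [pushLeft],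
    show pushRight s n = ((n + 1 : ℕ) : ℤ) by grind [pushRight]] at harc
  constructor <;> intro h
  · refine (harc.1 h.isDyckArc).isDyckHt fun x hx => ?_
    rcases hx with hx | hx
    · have := h.eq_zero (x - 1) (by push_cast; omega)
      rwa [spreadFn_of_lt (by omega), sub_add_cancel] at this
    · have := h.eq_zero (x + 1) (by push_cast; omega)
      rwa [spreadFn_of_gt (by omega), add_sub_cancel_right] at this
  · refine (harc.2 h.isDyckArc).isDyckHt fun x hx => ?_
    push_cast at hx
    rcases hx with hx | hx
    · rw [spreadFn_of_lt (by omega)]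
      exact h.eq_zero _ (by omega)
    · rw [spreadFn_of_gt (by omega)]
      exact h.eq_zero _ (by omega)

lemma mem_spreadTile {t : Finset (ℤ × ℤ)} {c : ℤ × ℤ} :
    c ∈ spreadTile s t ↔ pullPt s c ∈ t := by
  obtain ⟨x, y⟩ := c
  simp only [spreadTile, pullPt, pullCol, mem_union, mem_image, mem_filter, Prod.exists,
    Prod.mk.injEq]
  grind

lemma pushLeft_mem_spreadTile {t : Finset (ℤ × ℤ)} :
    (pushLeft s x, z) ∈ spreadTile s t ↔ (x, z) ∈ t := by
  rw [mem_spreadTile, pullPt_pushLeft]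

lemma spreadTile_injective (s : ℤ) : Function.Injective (spreadTile s) := fun t u h => by
  ext ⟨x, z⟩
  rw [← pushLeft_mem_spreadTile, h, pushLeft_mem_spreadTile]

lemma left_mem_spreadTile_iff {t : Finset (ℤ × ℤ)} :
    (s - 1, z) ∈ spreadTile s t ↔ (s, z + 1) ∈ spreadTile s t := by
  simp [mem_spreadTile, pullPt, pullCol]

lemma right_mem_spreadTile_iff {t : Finset (ℤ × ℤ)} :
    (s + 1, z) ∈ spreadTile s t ↔ (s, z + 1) ∈ spreadTile s t := by
  simp [mem_spreadTile, pullPt, pullCol]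

lemma spreadTile_image_pullPt {t : Finset (ℤ × ℤ)}
    (hleft : ∀ z, (s - 1, z) ∈ t ↔ (s, z + 1) ∈ t) (hright : ∀ z, (s + 1, z) ∈ t ↔ (s, z + 1) ∈ t) :
    spreadTile s (t.image (pullPt s)) = t := by
  have hpush (c : ℤ × ℤ) : c ∈ t ↔ (pushLeft s (pullPt s c).1, (pullPt s c).2) ∈ t := by
    obtain ⟨x, y⟩ := c
    simp only [pullPt]
    obtain hx | rfl | rfl | hx : x < s ∨ x = s ∨ x = s + 1 ∨ s + 1 < x := by omega
    · rw [show pushLeft s (pullCol s x) = x by grind [pushLeft, pullCol], if_neg hx.ne]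
    · rw [show pushLeft x (pullCol x x) = x - 1 by grind [pushLeft, pullCol], if_pos rfl, hleft,
        sub_add_cancel]
    · rw [show pushLeft s (pullCol s (s + 1)) = s - 1 by grind [pushLeft, pullCol],
        if_neg (by omega), hleft, hright]
    · rw [show pushLeft s (pullCol s x) = x by grind [pushLeft, pullCol], if_neg (by omega)]
  ext c
  rw [mem_spreadTile, mem_image]
  refine ⟨fun ⟨d, hd, hdc⟩ => ?_, fun hc => ⟨c, hc, rfl⟩⟩
  rw [hpush, ← hdc]
  exact (hpush d).1 hd

lemma isDyckTile_spreadTile_iff {t : Finset (ℤ × ℤ)} :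
    IsDyckTile (spreadTile s t) ↔ IsDyckTile t := by
  constructor <;> intro h <;> obtain ⟨a, b, f, hf, ht⟩ := isDyckTile_iff.1 h
  · have hleft (z) : (a ≤ s - 1 ∧ s - 1 ≤ b) ∧ f (s - 1) = z ↔ (a ≤ s ∧ s ≤ b) ∧ f s = z + 1 := by
      rw [← ht, ← ht, left_mem_spreadTile_iff]
    have hright (z) : (a ≤ s + 1 ∧ s + 1 ≤ b) ∧ f (s + 1) = z ↔ (a ≤ s ∧ s ≤ b) ∧ f s = z + 1 := by
      rw [← ht, ← ht, right_mem_spreadTile_iff]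
    have hpeak : a ≤ s → s ≤ b → (a < s ∧ f (s - 1) = f s - 1) ∧ s < b ∧ f (s + 1) = f s - 1 := by
      have := hleft (f s - 1)
      have := hright (f s - 1)
      omega
    have hleft_end : a ≤ s - 1 → s - 1 ≤ b → s ≤ b := by
      have := hleft (f (s - 1))
      omega
    have hright_end : a ≤ s + 1 → s + 1 ≤ b → a ≤ s := by
      have := hright (f (s + 1))
      omega
    have hab := hf.le
    have ha : pushLeft s (pullCol s a) = a := by grind [pushLeft, pullCol]
    have hb : pushRight s (pullCol s b) = b := by grind [pushRight, pullCol]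
    refine isDyckTile_iff.2 ⟨pullCol s a, pullCol s b, f ∘ pushLeft s, ?_, fun x y => ?_⟩
    · rw [← isDyckArc_spreadFn_iff (s := s), ha, hb]
      refine hf.congr fun x hax hxb => ?_
      simp only [spreadFn, Function.comp_apply, pushLeft]
      grind
    · rw [← pushLeft_mem_spreadTile, ht, Function.comp_apply]
      refine and_congr_left' ?_
      grind [pushLeft, pullCol]
  · refine isDyckTile_iff.2 ⟨_, _, _, (isDyckArc_spreadFn_iff (s := s)).2 hf, fun x y => ?_⟩
    rw [mem_spreadTile, pullPt, ht]
    grind [spreadFn, pullCol, pushLeft, pushRight]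

lemma spreadTiles_injective (s : ℤ) : Function.Injective (spreadTiles s) :=
  image_injective (spreadTile_injective s)

namespace Diagram

variable {n : ℕ} {D : Diagram n}

/-- The spread of a diagram at column `s`. -/
def spread (s : ℤ) (D : Diagram n) : Diagram (n + 1) :=
  ⟨spreadFn s D.lower, spreadFn s D.upper, spreadTiles s D.tiles⟩

lemma spread_injective (s : ℤ) : Function.Injective (spread s : Diagram n → Diagram (n + 1)) :=
  fun _ _ h => Diagram.ext (spreadFn_injective s (congrArg lower h))
    (spreadFn_injective s (congrArg upper h)) (spreadTiles_injective s (congrArg tiles h))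

lemma forall_mem_tiles_spread {p : Finset (ℤ × ℤ) → Prop} :
    (∀ t ∈ (D.spread s).tiles, p t) ↔ ∀ t ∈ D.tiles, p (spreadTile s t) :=
  forall_mem_image

lemma exists_mem_tiles_spread {c : ℤ × ℤ} :
    (∃ t ∈ (D.spread s).tiles, c ∈ t) ↔ ∃ t ∈ D.tiles, pullPt s c ∈ t := by
  simp [spread, spreadTiles, mem_spreadTile]

lemma isTiling_spread_iff (hs : s ∈ Icc (-(n : ℤ)) n) : (D.spread s).IsTiling ↔ D.IsTiling := by
  constructor <;> intro h
  · refine ⟨(isDyckHt_spreadFn_iff hs).1 h.isDyckHt_lower,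
      (isDyckHt_spreadFn_iff hs).1 h.isDyckHt_upper, fun x => ?_, fun t ht => ?_,
      fun t ht u hu ⟨x, z⟩ hct hcu => ?_, fun x z => ?_⟩
    · rw [← spreadFn_pushLeft s D.lower, ← spreadFn_pushLeft s D.upper]
      exact h.lower_le_upper _
    · exact isDyckTile_spreadTile_iff.1 (forall_mem_tiles_spread.1 h.isDyckTile t ht)
    · exact spreadTile_injective s (h.eq_of_mem _ (mem_image_of_mem _ ht) _ (mem_image_of_mem _ hu)
        _ (pushLeft_mem_spreadTile.2 hct) (pushLeft_mem_spreadTile.2 hcu))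
    · have hmem := h.exists_mem_iff (pushLeft s x) z
      rw [exists_mem_tiles_spread, pullPt_pushLeft] at hmem
      simp only [hmem, spread, spreadFn_pushLeft]
      refine and_congr_right' (and_congr_right' ?_)
      unfold pushLeft
      split_ifs <;> omega
  · refine ⟨(isDyckHt_spreadFn_iff hs).2 h.isDyckHt_lower,
      (isDyckHt_spreadFn_iff hs).2 h.isDyckHt_upper, fun x => ?_, ?_, ?_, fun x z => ?_⟩
    · have := h.lower_le_upper (pullCol s x)
      simp only [spread, spreadFn, pullCol] at this ⊢
      split_ifs at this ⊢ <;> simp_all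
    · exact forall_mem_tiles_spread.2 fun t ht => isDyckTile_spreadTile_iff.2 (h.isDyckTile t ht)
    · simp only [forall_mem_tiles_spread, mem_spreadTile]
      exact fun t ht u hu c hct hcu => congrArg _ (h.eq_of_mem t ht u hu _ hct hcu)
    · rw [exists_mem_tiles_spread, pullPt, h.exists_mem_iff]
      simp only [spread, spreadFn, pullCol]
      split_ifs <;> omega

lemma coverInclusive_spread_iff : (D.spread s).CoverInclusive ↔ D.CoverInclusive := by
  simp only [coverInclusive_iff, forall_mem_tiles_spread]
  refine forall₄_congr fun t _ u _ => ⟨fun h x y z hy hz hlt x' y' hx' => ?_,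
    fun h x y z hy hz hlt x' y' hx' => ?_⟩
  · obtain ⟨z', hz'⟩ := h (pushLeft s x) y z (pushLeft_mem_spreadTile.2 hy)
      (pushLeft_mem_spreadTile.2 hz) hlt (pushLeft s x') y' (pushLeft_mem_spreadTile.2 hx')
    exact ⟨z', pushLeft_mem_spreadTile.1 hz'⟩
  · rw [mem_spreadTile] at hy hz hx'
    obtain ⟨z', hz'⟩ := h _ _ _ hy hz (by dsimp only; split_ifs <;> omega) _ _ hx'
    refine ⟨if x' = s then z' + 1 else z', mem_spreadTile.2 ?_⟩
    simp only [pullPt] at hz' ⊢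
    split_ifs <;> simpa using hz'

end Diagram

end Spread

section BigPeaks

namespace Diagram

variable {n : ℕ} {D : Diagram n} {t : Finset (ℤ × ℤ)} {s z : ℤ}

/-- `EligibleCol` for diagrams. -/
def IsEligible (D : Diagram n) (c : ℤ) : Prop := EligibleCol D.upper D.tiles c

/-- The upper boundary of `D` has a peak in column `s` which is not the top corner of a one-box
tile. These peaks are the ones created by spreading. -/
def HasBigPeak (D : Diagram n) (s : ℤ) : Prop :=
  D.IsEligible s ∧ D.upper (s + 1) = D.upper s - 1

lemma hasBigPeak_spread (s : ℤ) (D : Diagram n) : (D.spread s).HasBigPeak s := by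
  refine ⟨⟨?_, fun hmem => ?_⟩, ?_⟩
  · simp [spread, spreadFn]
  · obtain ⟨t, -, ht⟩ := mem_image.1 hmem
    have hself : (s, (D.spread s).upper s - 3 + 1) ∈ spreadTile s t := by
      rw [ht, mem_singleton]
      congr 1
      ring
    have hleft := left_mem_spreadTile_iff.2 hself
    rw [ht, mem_singleton, Prod.mk_inj] at hleft
    omega
  · simp [spread, spreadFn]

lemma HasBigPeak.ne_succ_of_isEligible {c : ℤ} (hs : D.HasBigPeak s) (hc : D.IsEligible c) :
    c ≠ s + 1 := by
  rintro rfl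
  have := hc.1
  rw [add_sub_cancel_right, hs.2] at this
  omega

namespace IsTiling

variable (hD : D.IsTiling)

include hD

lemma mem_Ioo_of_isEligible (hs : D.IsEligible s) : s ∈ Ioo (-(n : ℤ)) n :=
  hD.isDyckHt_upper.mem_Ioo_of_pos (by linarith [hs.1, hD.isDyckHt_upper.nonneg (s - 1)])

lemma neighbors_mem_of_top (hs : D.HasBigPeak s) (ht : t ∈ D.tiles)
    (htop : (s, D.upper s - 2) ∈ t) :
    (s - 1, D.upper s - 3) ∈ t ∧ (s + 1, D.upper s - 3) ∈ t := by
  rw [show D.upper s - 3 = D.upper s - 2 - 1 by ring]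
  refine (hD.isDyckTile t ht).neighbors_mem_of_peak htop ?_ (fun hmem => ?_) fun hmem => ?_
  · rintro rfl
    exact hs.1.2 ht
  · linarith [(hD.bounds_of_mem ht hmem).2, hs.1.1]
  · linarith [(hD.bounds_of_mem ht hmem).2, hs.2]

lemma not_hasTopBox_succ (hs : D.HasBigPeak s) : ¬D.HasTopBox (s + 1) := fun hbox => by
  have hsn := mem_Ioo.1 (hD.mem_Ioo_of_isEligible hs.1)
  have hlow := hD.lower_le_of_hasTopBox hbox
  have hlower := hD.isDyckHt_lower.step s hsn.1.le hsn.2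
  have hdown := hs.2
  obtain ⟨t, ht, htop⟩ := hD.exists_mem (x := s) (z := D.upper s - 2)
    (by omega) (by omega) (by omega)
  have hright := (hD.neighbors_mem_of_top hs ht htop).2
  rw [show D.upper s - 3 = D.upper (s + 1) - 2 by rw [hs.2]; ring] at hright
  obtain rfl := hD.eq_of_mem _ hbox t ht _ (mem_singleton_self _) hright
  simp at htop

-- Downward induction on `z`: the tile through `(s, z + 2)` occupies `(s - 1, z + 1)` and
-- `(s + 1, z + 1)`, so the tile through `(s, z)`, which is at least as wide, steps down there.
lemma neighbors_mem (hCI : D.CoverInclusive) (hs : D.HasBigPeak s) (ht : t ∈ D.tiles)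
    (hz : (s, z) ∈ t) : (s - 1, z - 1) ∈ t ∧ (s + 1, z - 1) ∈ t := by
  have hbounds := hD.bounds_of_mem ht hz
  have hpar := ((hD.exists_mem_iff s z).1 ⟨t, ht, hz⟩).2.2
  have hparUpper := hD.isDyckHt_upper.parity
    (Ioo_subset_Icc_self (hD.mem_Ioo_of_isEligible hs.1))
  obtain ⟨k, rfl⟩ : ∃ k : ℕ, z = D.upper s - 2 - 2 * k :=
    ⟨((D.upper s - 2 - z) / 2).toNat, by omega⟩
  clear hpar hparUpper
  induction k generalizing t with
  | zero =>
    have := hD.neighbors_mem_of_top hs ht (by simpa using hz)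
    convert this using 3 <;> simp <;> ring
  | succ k ih =>
    push_cast at hz hbounds ⊢
    obtain ⟨u, hu, hzu⟩ := hD.exists_mem (x := s) (z := D.upper s - 2 - 2 * k)
      (by omega) (by omega) (by omega)
    obtain ⟨huLeft, huRight⟩ := ih hu hzu (hD.bounds_of_mem hu hzu)
    have hne : t ≠ u := by
      rintro rfl
      have := (hD.isDyckTile t ht).height_unique hz hzu
      omega
    have hwide {x y : ℤ} (hxy : (x, y) ∈ u) : ∃ w, (x, w) ∈ t ∧ w ≠ y := by
      obtain ⟨w, hw⟩ := coverInclusive_iff.1 hCI u hu t ht s _ _ hzu hz (by omega) x y hxy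
      refine ⟨w, hw, ?_⟩
      rintro rfl
      exact hne (hD.eq_of_mem t ht u hu _ hw hxy)
    obtain ⟨y, hy, hyne⟩ := hwide huLeft
    obtain ⟨w, hw, hwne⟩ := hwide huRight
    have hstepLeft := (hD.isDyckTile t ht).eq_of_mem_succ hy (by rwa [sub_add_cancel])
    have hstepRight := (hD.isDyckTile t ht).eq_of_mem_succ hz hw
    constructor
    · convert hy using 2
      omega
    · convert hw using 2
      omega

lemma mem_of_neighbor (hCI : D.CoverInclusive) (hs : D.HasBigPeak s) (ht : t ∈ D.tiles)
    (hz : (s - 1, z) ∈ t ∨ (s + 1, z) ∈ t) : (s, z + 1) ∈ t := by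
  have hsn := mem_Ioo.1 (hD.mem_Ioo_of_isEligible hs.1)
  have hparUpper := hD.isDyckHt_upper.parity (x := s) (mem_Icc.2 ⟨hsn.1.le, hsn.2.le⟩)
  have hstepLeft := hD.isDyckHt_lower.step (s - 1) (by omega) (by omega)
  have hstepRight := hD.isDyckHt_lower.step s hsn.1.le hsn.2
  rw [sub_add_cancel] at hstepLeft
  obtain ⟨⟨hupLeft, -⟩, hupRight⟩ := id hs
  obtain ⟨u, hu, hzu⟩ : ∃ u ∈ D.tiles, (s, z + 1) ∈ u := by
    rw [hD.exists_mem_iff]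
    rcases hz with hz | hz <;> have := (hD.exists_mem_iff _ z).1 ⟨t, ht, hz⟩ <;> omega
  have hneighbors := hD.neighbors_mem hCI hs hu hzu
  rw [add_sub_cancel_right] at hneighbors
  rcases hz with hz | hz
  · rwa [hD.eq_of_mem t ht u hu _ hz hneighbors.1]
  · rwa [hD.eq_of_mem t ht u hu _ hz hneighbors.2]

lemma lower_peak (hCI : D.CoverInclusive) (hs : D.HasBigPeak s) :
    D.lower (s - 1) = D.lower s - 1 ∧ D.lower (s + 1) = D.lower s - 1 := by
  have hsn := mem_Ioo.1 (hD.mem_Ioo_of_isEligible hs.1)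
  have hparLower := hD.isDyckHt_lower.parity (x := s) (mem_Icc.2 ⟨hsn.1.le, hsn.2.le⟩)
  have hparUpper := hD.isDyckHt_upper.parity (x := s) (mem_Icc.2 ⟨hsn.1.le, hsn.2.le⟩)
  have hstepLeft := hD.isDyckHt_lower.step (s - 1) (by omega) (by omega)
  have hstepRight := hD.isDyckHt_lower.step s hsn.1.le hsn.2
  rw [sub_add_cancel] at hstepLeft
  suffices D.lower (s - 1) < D.lower s ∧ D.lower (s + 1) < D.lower s by omega
  obtain ⟨⟨hupLeft, -⟩, hupRight⟩ := id hs
  obtain heq | hlt := (hD.lower_le_upper s).eq_or_lt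
  · have := hD.lower_le_upper (s - 1)
    have := hD.lower_le_upper (s + 1)
    omega
  · obtain ⟨t, ht, hz⟩ := hD.exists_mem (x := s) le_rfl (by omega) (by omega)
    obtain ⟨hleft, hright⟩ := hD.neighbors_mem hCI hs ht hz
    have := (hD.bounds_of_mem ht hleft).1
    have := (hD.bounds_of_mem ht hright).1
    omega

end IsTiling

lemma IsTiling.exists_spread_eq {D : Diagram (n + 1)} (hD : D.IsTiling) (hCI : D.CoverInclusive)
    (hs : D.HasBigPeak s) : ∃ C : Diagram n, C.spread s = D := by
  obtain ⟨hleft, hright⟩ := hD.lower_peak hCI hs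
  refine ⟨⟨D.lower ∘ pushLeft s, D.upper ∘ pushLeft s, D.tiles.image (image (pullPt s))⟩,
    Diagram.ext (spreadFn_comp_pushLeft hleft hright)
      (spreadFn_comp_pushLeft (eq_sub_of_add_eq hs.1.1.symm) hs.2) ?_⟩
  have hmem (t) (ht : t ∈ D.tiles) (z : ℤ) (hz : (s, z + 1) ∈ t) :
      (s - 1, z) ∈ t ∧ (s + 1, z) ∈ t := by
    simpa using hD.neighbors_mem hCI hs ht hz
  have hspread : Set.EqOn (spreadTile s ∘ image (pullPt s)) id D.tiles := fun t ht =>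
    spreadTile_image_pullPt
      (fun z => ⟨fun h => hD.mem_of_neighbor hCI hs ht (.inl h), fun h => (hmem t ht z h).1⟩)
      fun z => ⟨fun h => hD.mem_of_neighbor hCI hs ht (.inr h), fun h => (hmem t ht z h).2⟩
  rw [spread, spreadTiles, image_image, image_congr hspread, image_id]

end Diagram

end BigPeaks

section AddableLayers

namespace Diagram

variable {n : ℕ} {D : Diagram n} {A : Finset ℤ} {s c x : ℤ}

/-- `SpecialCol` for diagrams. -/
def IsSpecialCol (D : Diagram n) (s : ℤ) : Prop :=
  D.IsEligible s ∧ ∀ c, D.IsEligible c → c ≤ s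

lemma IsSpecialCol.unique (hs : D.IsSpecialCol s) (hc : D.IsSpecialCol c) : s = c :=
  le_antisymm (hc.2 s hs.1) (hs.2 c hc.1)

lemma IsTiling.exists_isSpecialCol (hD : D.IsTiling) (hc : D.IsEligible c) :
    ∃ s, D.IsSpecialCol s := by
  classical
  let E : Finset ℤ := {c ∈ Ioo (-(n : ℤ)) n | D.IsEligible c}
  have hmem {c : ℤ} : c ∈ E ↔ D.IsEligible c :=
    mem_filter.trans (and_iff_right_of_imp hD.mem_Ioo_of_isEligible)
  have hE : E.Nonempty := ⟨c, hmem.2 hc⟩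
  exact ⟨E.max' hE, hmem.1 (E.max'_mem hE), fun c hc => E.le_max' c (hmem.2 hc)⟩

lemma IsTiling.exists_isEligible {D : Diagram (n + 1)} (hD : D.IsTiling) :
    ∃ c, D.IsEligible c := by
  have hzero := hD.isDyckHt_upper.eq_zero (-(n + 1 : ℕ)) (Or.inl le_rfl)
  have hstep := hD.isDyckHt_upper.step (-(n + 1 : ℕ)) le_rfl (by omega)
  have hnonneg := hD.isDyckHt_upper.nonneg (-(n + 1 : ℕ) + 1)
  refine ⟨-(n + 1 : ℕ) + 1, by rw [add_sub_cancel_right]; omega, fun hbox => ?_⟩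
  have := hD.lower_le_of_hasTopBox hbox
  have := hD.isDyckHt_lower.nonneg (-(n + 1 : ℕ) + 1)
  omega

lemma IsTiling.isEligible_addLayer_iff (hD : D.IsTiling) :
    (D.addLayer A).IsEligible c ↔ c ∉ A ∧ c - 1 ∉ A ∧ D.IsEligible c := by
  by_cases hc : c ∈ A
  · exact iff_of_false (fun h => h.2 (hasTopBox_addLayer hc)) fun h => h.1 hc
  have hstep : D.upper c ≤ D.upper (c - 1) + 1 := by
    by_cases hout : c - 1 < -n ∨ (n : ℤ) ≤ c - 1
    · rw [hD.isDyckHt_upper.eq_zero c (by omega)]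
      linarith [hD.isDyckHt_upper.nonneg (c - 1)]
    · have := hD.isDyckHt_upper.step (c - 1) (by omega) (by omega)
      rw [sub_add_cancel] at this
      omega
  have hbox := not_congr (hasTopBox_addLayer_iff (D := D) hc)
  by_cases hc' : c - 1 ∈ A
  · refine iff_of_false (fun h => ?_) fun h => h.2.1 hc'
    have := h.1
    rw [addLayer_upper_of_notMem hc, addLayer_upper_of_mem hc'] at this
    omega
  · simp only [hc, hc', not_false_eq_true, true_and]
    refine and_congr ?_ hbox
    rw [addLayer_upper_of_notMem hc, addLayer_upper_of_notMem hc']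

/-- The conditions under which a layer of boxes on top of `A` turns a tiling with a big peak in
column `s` into a tiling with special column `s`. -/
structure IsAddable (D : Diagram n) (s : ℤ) (A : Finset ℤ) : Prop where
  subset_Ioo : A ⊆ Ioo s n
  up_of_leaving : ∀ x ∈ A, x + 1 ∉ A → D.upper (x + 1) = D.upper x + 1
  down_of_entering : ∀ x ∉ A, x + 1 ∈ A → D.upper (x + 1) = D.upper x - 1
  pred_mem_of_isEligible : ∀ c, s < c → D.IsEligible c → c - 1 ∈ A

/-- The conditions under which removing the one-box tiles on top of `A` turns a tiling with special
column `s` into a tiling with a big peak in column `s`. -/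
structure IsRemovable (D : Diagram n) (s : ℤ) (A : Finset ℤ) : Prop where
  subset_Ioo : A ⊆ Ioo s n
  hasTopBox : ∀ x ∈ A, D.HasTopBox x
  down_of_leaving : ∀ x, x = s ∨ x ∈ A → x + 1 ∉ A → D.upper (x + 1) = D.upper x - 1
  up_of_entering : ∀ x ∉ A, x + 1 ∈ A → D.upper (x + 1) = D.upper x + 1

namespace IsAddable

variable (hA : D.IsAddable s A)

include hA

lemma notMem_of_le (hx : x ≤ s) : x ∉ A := fun h => (mem_Ioo.1 (hA.subset_Ioo h)).1.not_ge hx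

lemma isTiling_addLayer (hD : D.IsTiling) (hs : D.IsEligible s) : (D.addLayer A).IsTiling := by
  have hsn := mem_Ioo.1 (hD.mem_Ioo_of_isEligible hs)
  refine hD.addLayer ⟨fun x hx => ?_, fun x => ?_, fun x hxl hxr => ?_⟩
  · have hxA : x ∉ A := fun h => by
      have := mem_Ioo.1 (hA.subset_Ioo h)
      omega
    rw [addLayer_upper_of_notMem hxA, hD.isDyckHt_upper.eq_zero x hx]
  · have := hD.isDyckHt_upper.nonneg x
    simp only [addLayer]
    split_ifs <;> omega
  · have := hD.isDyckHt_upper.step x hxl hxr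
    have := hA.up_of_leaving x
    have := hA.down_of_entering x
    simp only [addLayer]
    split_ifs <;> grind

lemma isSpecialCol_addLayer (hD : D.IsTiling) (hs : D.IsEligible s) :
    (D.addLayer A).IsSpecialCol s := by
  refine ⟨hD.isEligible_addLayer_iff.2
    ⟨hA.notMem_of_le le_rfl, hA.notMem_of_le (by omega), hs⟩, fun c hc => ?_⟩
  obtain ⟨-, hpred, hc⟩ := hD.isEligible_addLayer_iff.1 hc
  by_contra! hlt
  exact hpred (hA.pred_mem_of_isEligible c hlt hc)

end IsAddable

namespace IsRemovable

variable (hA : D.IsRemovable s A)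

include hA

lemma notMem_of_le (hx : x ≤ s) : x ∉ A := fun h => (mem_Ioo.1 (hA.subset_Ioo h)).1.not_ge hx

lemma isTiling_removeLayer (hD : D.IsTiling) : (D.removeLayer A).IsTiling := by
  refine hD.removeLayer hA.hasTopBox ⟨fun x hx => ?_, fun x => ?_, fun x hxl hxr => ?_⟩
  · have hxA : x ∉ A := fun h => by
      have := mem_Ioo.1 (hD.mem_Ioo_of_hasTopBox (hA.hasTopBox x h))
      omega
    rw [removeLayer_upper_of_notMem hxA, hD.isDyckHt_upper.eq_zero x hx]
  · by_cases hx : x ∈ A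
    · rw [removeLayer_upper_of_mem hx]
      exact (hD.isDyckHt_lower.nonneg x).trans (hD.lower_le_of_hasTopBox (hA.hasTopBox x hx))
    · rw [removeLayer_upper_of_notMem hx]
      exact hD.isDyckHt_upper.nonneg x
  · have := hD.isDyckHt_upper.step x hxl hxr
    have := hA.down_of_leaving x
    have := hA.up_of_entering x
    simp only [removeLayer]
    split_ifs <;> grind

lemma hasBigPeak_removeLayer (hs : D.IsEligible s) : (D.removeLayer A).HasBigPeak s := by
  have hsA := hA.notMem_of_le le_rfl
  refine ⟨⟨?_, fun hmem => hs.2 ?_⟩, ?_⟩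
  · rw [removeLayer_upper_of_notMem hsA, removeLayer_upper_of_notMem (hA.notMem_of_le (by omega))]
    exact hs.1
  · rw [removeLayer_upper_of_notMem hsA] at hmem
    exact (mem_sdiff.1 hmem).1
  · rw [removeLayer_upper_of_notMem hsA]
    by_cases hmem : s + 1 ∈ A
    · rw [removeLayer_upper_of_mem hmem, hA.up_of_entering s hsA hmem]
      ring
    · rw [removeLayer_upper_of_notMem hmem, hA.down_of_leaving s (Or.inl rfl) hmem]

end IsRemovable

end Diagram

end AddableLayers

section Rules

/-- A rule for growing and shrinking tilings by layers: it selects the columns on which the growth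
map adds boxes after spreading, and those from which the inverse map removes boxes before
contracting. The last two fields make the two selections correspond to each other. -/
structure LayerRule where
  growCols : ∀ {n : ℕ}, Diagram n → ℤ → Finset ℤ
  shrinkCols : ∀ {n : ℕ}, Diagram n → ℤ → Finset ℤ
  isAddable : ∀ {n : ℕ} {D : Diagram n} {s : ℤ}, D.IsTiling → D.HasBigPeak s →
    D.IsAddable s (growCols D s)
  isRemovable : ∀ {n : ℕ} {D : Diagram n} {s : ℤ}, D.IsTiling → D.IsSpecialCol s →
    D.IsRemovable s (shrinkCols D s)
  shrinkCols_addLayer : ∀ {n : ℕ} {D : Diagram n} {s : ℤ}, D.IsTiling → D.HasBigPeak s →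
    shrinkCols (D.addLayer (growCols D s)) s = growCols D s
  growCols_removeLayer : ∀ {n : ℕ} {D : Diagram n} {s : ℤ}, D.IsTiling → D.IsSpecialCol s →
    growCols (D.removeLayer (shrinkCols D s)) s = shrinkCols D s

namespace Diagram

variable {n : ℕ} {D : Diagram n} {s c x : ℤ}

lemma IsSpecialCol.hasTopBox_of_up (hs : D.IsSpecialCol s) (hx : s < x)
    (hup : D.upper x = D.upper (x - 1) + 1) : D.HasTopBox x := by
  by_contra hbox
  exact (hs.2 x ⟨hup, hbox⟩).not_gt hx

/-- The columns right of `s` in which an up step of the upper boundary starts. -/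
def upStarts (D : Diagram n) (s : ℤ) : Finset ℤ :=
  {x ∈ Ioo s n | D.upper (x + 1) = D.upper x + 1}

/-- The columns right of `s` in which an up step of the upper boundary ends. -/
def upEnds (D : Diagram n) (s : ℤ) : Finset ℤ :=
  {x ∈ Ioo s n | D.upper x = D.upper (x - 1) + 1}

lemma mem_upStarts : x ∈ D.upStarts s ↔ (s < x ∧ x < n) ∧ D.upper (x + 1) = D.upper x + 1 := by
  rw [upStarts, mem_filter, mem_Ioo]

lemma mem_upEnds : x ∈ D.upEnds s ↔ (s < x ∧ x < n) ∧ D.upper x = D.upper (x - 1) + 1 := by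
  rw [upEnds, mem_filter, mem_Ioo]

lemma isAddable_upStarts (hD : D.IsTiling) (hs : D.HasBigPeak s) :
    D.IsAddable s (D.upStarts s) where
  subset_Ioo := filter_subset _ _
  up_of_leaving x hx _ := (mem_upStarts.1 hx).2
  down_of_entering x hx hx' := by
    rw [mem_upStarts] at hx hx'
    have hsn := mem_Ioo.1 (hD.mem_Ioo_of_isEligible hs.1)
    have := hD.isDyckHt_upper.step x (by omega) (by omega)
    obtain rfl | hsx := eq_or_ne x s
    · exact hs.2
    · omega
  pred_mem_of_isEligible c hsc hc := by
    have hcn := mem_Ioo.1 (hD.mem_Ioo_of_isEligible hc)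
    have hne := hs.ne_succ_of_isEligible hc
    rw [mem_upStarts, sub_add_cancel]
    exact ⟨by omega, hc.1⟩

lemma isRemovable_upEnds (hD : D.IsTiling) (hs : D.IsSpecialCol s) :
    D.IsRemovable s (D.upEnds s) where
  subset_Ioo := filter_subset _ _
  hasTopBox x hx := by
    rw [mem_upEnds] at hx
    exact hs.hasTopBox_of_up hx.1.1 hx.2
  down_of_leaving x hx hx' := by
    have hsn := mem_Ioo.1 (hD.mem_Ioo_of_isEligible hs.1)
    have hxn : s ≤ x ∧ x < n := by
      obtain rfl | hx := hx
      · omega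
      · rw [mem_upEnds] at hx
        omega
    rw [mem_upEnds, add_sub_cancel_right] at hx'
    have := hD.isDyckHt_upper.step x (by omega) hxn.2
    have := hD.isDyckHt_upper.nonneg x
    have := hD.isDyckHt_upper.eq_zero (x + 1)
    omega
  up_of_entering x _ hx' := by
    rw [mem_upEnds, add_sub_cancel_right] at hx'
    exact hx'.2

open Classical in
/-- The columns right of `s` that have an eligible column to their right. -/
def colsBeforeEligible (D : Diagram n) (s : ℤ) : Finset ℤ :=
  {x ∈ Ioo s n | ∃ q, x < q ∧ D.IsEligible q}

open Classical in
/-- The maximal run of columns `s + 1, s + 2, …` whose topmost boxes are tiles of their own. -/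
def topBoxRun (D : Diagram n) (s : ℤ) : Finset ℤ :=
  {x ∈ Ioo s n | ∀ y, s < y → y ≤ x → D.HasTopBox y}

lemma mem_colsBeforeEligible :
    x ∈ D.colsBeforeEligible s ↔ (s < x ∧ x < n) ∧ ∃ q, x < q ∧ D.IsEligible q := by
  simp only [colsBeforeEligible, mem_filter, mem_Ioo]

lemma mem_topBoxRun :
    x ∈ D.topBoxRun s ↔ (s < x ∧ x < n) ∧ ∀ y, s < y → y ≤ x → D.HasTopBox y := by
  simp only [topBoxRun, mem_filter, mem_Ioo]

lemma IsTiling.succ_mem_topBoxRun (hD : D.IsTiling) (hsx : s ≤ x) (hbox : D.HasTopBox (x + 1))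
    (hrun : ∀ y, s < y → y ≤ x → D.HasTopBox y) : x + 1 ∈ D.topBoxRun s := by
  refine mem_topBoxRun.2 ⟨⟨by omega, (mem_Ioo.1 (hD.mem_Ioo_of_hasTopBox hbox)).2⟩,
    fun y hsy hyx => ?_⟩
  obtain rfl | hne := eq_or_ne y (x + 1)
  · exact hbox
  · exact hrun y hsy (by omega)

lemma IsTiling.colsBeforeEligible_of_isSpecialCol (hD : D.IsTiling) (hc : D.IsSpecialCol c) :
    D.colsBeforeEligible s = Ioo s c := by
  ext x
  rw [mem_colsBeforeEligible, mem_Ioo]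
  constructor
  · rintro ⟨hx, q, hxq, hq⟩
    exact ⟨hx.1, hxq.trans_le (hc.2 q hq)⟩
  · rintro ⟨hsx, hxc⟩
    have hcn := mem_Ioo.1 (hD.mem_Ioo_of_isEligible hc.1)
    exact ⟨⟨hsx, hxc.trans hcn.2⟩, c, hxc, hc.1⟩

lemma isAddable_Ioo (hD : D.IsTiling) (hs : D.HasBigPeak s) (hc : D.IsSpecialCol c) :
    D.IsAddable s (Ioo s c) where
  subset_Ioo := Ioo_subset_Ioo_right (mem_Ioo.1 (hD.mem_Ioo_of_isEligible hc.1)).2.le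
  up_of_leaving x hx hx' := by
    rw [mem_Ioo] at hx hx'
    obtain rfl : c = x + 1 := by omega
    simpa using hc.1.1
  down_of_entering x hx hx' := by
    rw [mem_Ioo] at hx hx'
    obtain rfl : x = s := by omega
    exact hs.2
  pred_mem_of_isEligible q hsq hq := by
    have hne := hs.ne_succ_of_isEligible hq
    have := hc.2 q hq
    exact mem_Ioo.2 (by omega)

lemma isRemovable_topBoxRun (hD : D.IsTiling) (hs : D.IsSpecialCol s) :
    D.IsRemovable s (D.topBoxRun s) where
  subset_Ioo _ hx := mem_Ioo.2 (mem_topBoxRun.1 hx).1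
  hasTopBox x hx := (mem_topBoxRun.1 hx).2 x (mem_topBoxRun.1 hx).1.1 le_rfl
  down_of_leaving x hx hx' := by
    have hsn := mem_Ioo.1 (hD.mem_Ioo_of_isEligible hs.1)
    have hbox : (s ≤ x ∧ x < n) ∧ ∀ y, s < y → y ≤ x → D.HasTopBox y := by
      obtain rfl | hx := hx
      · exact ⟨⟨le_rfl, hsn.2⟩, fun y h h' => absurd h h'.not_gt⟩
      · have := mem_topBoxRun.1 hx
        exact ⟨⟨this.1.1.le, this.1.2⟩, this.2⟩
    refine (hD.isDyckHt_upper.step x (by omega) hbox.1.2).resolve_left fun hup => hx' ?_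
    exact hD.succ_mem_topBoxRun hbox.1.1 (hs.hasTopBox_of_up (by omega) (by simpa using hup)) hbox.2
  up_of_entering x hx hx' := by
    rw [mem_topBoxRun] at hx hx'
    obtain rfl : x = s := by
      by_contra hne
      exact hx ⟨by omega, fun y hsy hyx => hx'.2 y hsy (by omega)⟩
    have hsn := mem_Ioo.1 (hD.mem_Ioo_of_isEligible hs.1)
    refine (hD.isDyckHt_upper.step x hsn.1.le hsn.2).resolve_right fun hdown => ?_
    exact hD.not_hasTopBox_succ ⟨hs.1, hdown⟩ (hx'.2 _ (by omega) le_rfl)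

lemma upEnds_addLayer_upStarts (hD : D.IsTiling) (hs : D.HasBigPeak s) :
    (D.addLayer (D.upStarts s)).upEnds s = D.upStarts s := by
  have hsn := mem_Ioo.1 (hD.mem_Ioo_of_isEligible hs.1)
  ext x
  rw [mem_upEnds, mem_upStarts, and_congr_right_iff]
  rintro ⟨hsx, hxn⟩
  have hleft := hD.isDyckHt_upper.step (x - 1) (by omega) (by omega)
  have hpeak : x - 1 = s → D.upper x = D.upper (x - 1) - 1 := by
    rintro rfl
    simpa using hs.2
  simp only [addLayer, mem_upStarts, sub_add_cancel] at hleft ⊢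
  split_ifs <;> omega

lemma upStarts_removeLayer_upEnds (hD : D.IsTiling) (hs : D.IsSpecialCol s) :
    (D.removeLayer (D.upEnds s)).upStarts s = D.upEnds s := by
  have hsn := mem_Ioo.1 (hD.mem_Ioo_of_isEligible hs.1)
  ext x
  rw [mem_upEnds, mem_upStarts, and_congr_right_iff]
  rintro ⟨hsx, hxn⟩
  have hright := hD.isDyckHt_upper.step x (by omega) hxn
  have hlast := hD.isDyckHt_upper.eq_zero (x + 1)
  have hnonneg := hD.isDyckHt_upper.nonneg x
  simp only [removeLayer, mem_upEnds, add_sub_cancel_right]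
  split_ifs <;> omega

lemma topBoxRun_addLayer_Ioo (hD : D.IsTiling) (hs : D.HasBigPeak s) (hc : D.IsSpecialCol c) :
    (D.addLayer (Ioo s c)).topBoxRun s = Ioo s c := by
  have hcn := mem_Ioo.1 (hD.mem_Ioo_of_isEligible hc.1)
  ext x
  rw [mem_topBoxRun, mem_Ioo]
  refine ⟨fun ⟨⟨hsx, _⟩, hbox⟩ => ⟨hsx, ?_⟩, fun ⟨hsx, hxc⟩ => ⟨⟨hsx, hxc.trans hcn.2⟩,
    fun y hsy hyx => hasTopBox_addLayer (mem_Ioo.2 ⟨hsy, hyx.trans_lt hxc⟩)⟩⟩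
  by_contra! hcx
  obtain rfl | hsc := (hc.2 s hs.1).eq_or_lt
  · exact hD.not_hasTopBox_succ hs ((hasTopBox_addLayer_iff (by simp)).1 (hbox _ (by omega) hsx))
  · exact hc.1.2 ((hasTopBox_addLayer_iff (by simp)).1 (hbox c hsc hcx))

lemma colsBeforeEligible_removeLayer_topBoxRun (hD : D.IsTiling) (hs : D.IsSpecialCol s) :
    (D.removeLayer (D.topBoxRun s)).colsBeforeEligible s = D.topBoxRun s := by
  have hA := isRemovable_topBoxRun hD hs
  have hadd := addLayer_removeLayer hA.hasTopBox
  ext x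
  rw [mem_colsBeforeEligible]
  constructor
  · rintro ⟨hx, q, hxq, hq⟩
    have hrun : q ∈ D.topBoxRun s ∨ q - 1 ∈ D.topBoxRun s := by
      by_contra! hnot
      have := (hA.isTiling_removeLayer hD).isEligible_addLayer_iff.2 ⟨hnot.1, hnot.2, hq⟩
      rw [hadd] at this
      exact (hs.2 q this).not_gt (hx.1.trans hxq)
    refine mem_topBoxRun.2 ⟨hx, fun y hsy hyx => ?_⟩
    rcases hrun with hrun | hrun <;> exact (mem_topBoxRun.1 hrun).2 y hsy (by omega)
  · intro hx
    obtain ⟨m, hm, hxm, hm'⟩ : ∃ m ∈ D.topBoxRun s, x ≤ m ∧ m + 1 ∉ D.topBoxRun s :=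
      ⟨max' _ ⟨x, hx⟩, max'_mem _ _, le_max' _ _ hx, fun h => by
        have := le_max' _ _ h
        omega⟩
    refine ⟨(mem_topBoxRun.1 hx).1, m + 1, by omega, ?_, fun hbox => hm' ?_⟩
    · rw [removeLayer_upper_of_notMem hm', add_sub_cancel_right, removeLayer_upper_of_mem hm,
        hA.down_of_leaving m (Or.inr hm) hm']
      ring
    · obtain ⟨⟨hsm, -⟩, hrun⟩ := mem_topBoxRun.1 hm
      refine hD.succ_mem_topBoxRun hsm.le ?_ hrun
      rw [← hadd]
      exact (hasTopBox_addLayer_iff hm').2 hbox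

end Diagram

/-- The rule of strip-grow and strip-shrink. -/
def stripRule : LayerRule where
  growCols := Diagram.upStarts
  shrinkCols := Diagram.upEnds
  isAddable := Diagram.isAddable_upStarts
  isRemovable := Diagram.isRemovable_upEnds
  shrinkCols_addLayer := Diagram.upEnds_addLayer_upStarts
  growCols_removeLayer := Diagram.upStarts_removeLayer_upEnds

/-- The rule of ribbon-grow and ribbon-shrink. -/
def ribbonRule : LayerRule where
  growCols := Diagram.colsBeforeEligible
  shrinkCols := Diagram.topBoxRun
  isAddable hD hs := by
    obtain ⟨c, hc⟩ := hD.exists_isSpecialCol hs.1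
    rw [hD.colsBeforeEligible_of_isSpecialCol hc]
    exact Diagram.isAddable_Ioo hD hs hc
  isRemovable := Diagram.isRemovable_topBoxRun
  shrinkCols_addLayer hD hs := by
    obtain ⟨c, hc⟩ := hD.exists_isSpecialCol hs.1
    rw [hD.colsBeforeEligible_of_isSpecialCol hc]
    exact Diagram.topBoxRun_addLayer_Ioo hD hs hc
  growCols_removeLayer := Diagram.colsBeforeEligible_removeLayer_topBoxRun

end Rules

section Growth

/-- The diagrams of cover-inclusive Dyck tilings of order `n`. -/
def coverInclusiveTilings (n : ℕ) : Set (Diagram n) := {D | D.IsTiling ∧ D.CoverInclusive}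

/-- The sequences `(p_1, …, p_n)` with `0 ≤ p_i ≤ 2(i - 1)`, indexed from `0`. -/
def growthSeqs (n : ℕ) : Set (Fin n → ℕ) := {p | ∀ i, p i ≤ 2 * (i : ℕ)}

namespace LayerRule

variable (R : LayerRule) {n : ℕ} {s : ℤ} {C : Diagram n}

/-- The growth map of a layer rule: spread at column `s`, then add a layer of boxes. -/
def grow (s : ℤ) (C : Diagram n) : Diagram (n + 1) :=
  (C.spread s).addLayer (R.growCols (C.spread s) s)

lemma isTiling_grow (hs : s ∈ Icc (-(n : ℤ)) n) (hC : C.IsTiling) : (R.grow s C).IsTiling :=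
  have hspread := (Diagram.isTiling_spread_iff hs).2 hC
  have hpeak := C.hasBigPeak_spread s
  (R.isAddable hspread hpeak).isTiling_addLayer hspread hpeak.1

lemma isSpecialCol_grow (hs : s ∈ Icc (-(n : ℤ)) n) (hC : C.IsTiling) :
    (R.grow s C).IsSpecialCol s :=
  have hspread := (Diagram.isTiling_spread_iff hs).2 hC
  have hpeak := C.hasBigPeak_spread s
  (R.isAddable hspread hpeak).isSpecialCol_addLayer hspread hpeak.1

lemma removeLayer_grow (hs : s ∈ Icc (-(n : ℤ)) n) (hC : C.IsTiling) :
    (R.grow s C).removeLayer (R.shrinkCols (R.grow s C) s) = C.spread s := by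
  have hspread := (Diagram.isTiling_spread_iff hs).2 hC
  rw [grow, R.shrinkCols_addLayer hspread (C.hasBigPeak_spread s), hspread.removeLayer_addLayer]

lemma coverInclusive_grow_iff (hs : s ∈ Icc (-(n : ℤ)) n) (hC : C.IsTiling) :
    (R.grow s C).CoverInclusive ↔ C.CoverInclusive :=
  ((Diagram.isTiling_spread_iff hs).2 hC).coverInclusive_addLayer_iff.trans
    Diagram.coverInclusive_spread_iff

lemma exists_grow_eq {E : Diagram (n + 1)} (hE : E ∈ coverInclusiveTilings (n + 1))
    (hs : E.IsSpecialCol s) :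
    s ∈ Icc (-(n : ℤ)) n ∧ ∃ C ∈ coverInclusiveTilings n, R.grow s C = E := by
  obtain ⟨hE, hCI⟩ := hE
  have hsn : s ∈ Icc (-(n : ℤ)) n := by
    have := mem_Ioo.1 (hE.mem_Ioo_of_isEligible hs.1)
    exact mem_Icc.2 (by omega)
  have hA := R.isRemovable hE hs
  have hadd := Diagram.addLayer_removeLayer hA.hasTopBox
  have hD := hA.isTiling_removeLayer hE
  have hDCI : (E.removeLayer (R.shrinkCols E s)).CoverInclusive := by
    rwa [← hD.coverInclusive_addLayer_iff, hadd]
  obtain ⟨C, hC⟩ := hD.exists_spread_eq hDCI (hA.hasBigPeak_removeLayer hs.1)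
  rw [← hC, Diagram.isTiling_spread_iff hsn] at hD
  rw [← hC, Diagram.coverInclusive_spread_iff] at hDCI
  exact ⟨hsn, C, ⟨hD, hDCI⟩, by rw [grow, hC, R.growCols_removeLayer hE hs, hadd]⟩

lemma bijOn_grow (n : ℕ) :
    Set.BijOn (fun q : ℤ × Diagram n => R.grow q.1 q.2)
      ((Icc (-(n : ℤ)) n : Set ℤ) ×ˢ coverInclusiveTilings n) (coverInclusiveTilings (n + 1)) := by
  refine ⟨?_, ?_, fun E hE => ?_⟩
  · rintro ⟨s, C⟩ ⟨hs, hC, hCI⟩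
    exact ⟨R.isTiling_grow hs hC, (R.coverInclusive_grow_iff hs hC).2 hCI⟩
  · rintro ⟨s, C⟩ ⟨hs, hC, -⟩ ⟨s', C'⟩ ⟨hs', hC', -⟩ heq
    dsimp only at hs hC hs' hC' heq
    obtain rfl : s = s' :=
      (R.isSpecialCol_grow hs hC).unique (heq ▸ R.isSpecialCol_grow hs' hC')
    have hspread := R.removeLayer_grow hs hC
    rw [heq, R.removeLayer_grow hs' hC'] at hspread
    rw [Diagram.spread_injective s hspread]
  · obtain ⟨c, hc⟩ := hE.1.exists_isEligible
    obtain ⟨s, hs⟩ := hE.1.exists_isSpecialCol hc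
    obtain ⟨hsn, C, hC, hgrow⟩ := R.exists_grow_eq hE hs
    exact ⟨(s, C), ⟨hsn, hC⟩, hgrow⟩

end LayerRule

end Growth

section Iteration

/-- The diagram of the empty tiling, from which `DTS` and `DTR` start. -/
def Diagram.empty : Diagram 0 := ⟨fun _ => 0, fun _ => 0, ∅⟩

lemma Diagram.isTiling_zero_iff {D : Diagram 0} : D.IsTiling ↔ D = empty := by
  constructor
  · intro hD
    have hlower : D.lower = fun _ => 0 := funext fun x => hD.isDyckHt_lower.eq_zero x (by omega)
    have hupper : D.upper = fun _ => 0 := funext fun x => hD.isDyckHt_upper.eq_zero x (by omega)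
    refine Diagram.ext hlower hupper (eq_empty_of_forall_notMem fun t ht => ?_)
    obtain ⟨⟨x, z⟩, hxz⟩ := (hD.isDyckTile t ht).nonempty
    have := hD.bounds_of_mem ht hxz
    rw [hlower, hupper] at this
    omega
  · rintro rfl
    have hht : IsDyckHt 0 fun _ => 0 := ⟨fun _ _ => rfl, fun _ => le_rfl, fun x _ _ => by omega⟩
    refine ⟨hht, hht, fun _ => le_rfl, ?_, ?_, fun x z => ?_⟩
    · simp [empty]
    · simp [empty]
    · simp only [empty, notMem_empty, false_and, exists_false, false_iff]
      omega

lemma bijOn_growthSeqs_succ (n : ℕ) :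
    Set.BijOn (fun p : Fin (n + 1) → ℕ => ((p (Fin.last n) : ℤ) - n, fun i => p i.castSucc))
      (growthSeqs (n + 1)) ((Icc (-(n : ℤ)) n : Set ℤ) ×ˢ growthSeqs n) := by
  refine ⟨fun p hp => ⟨?_, fun i => hp i.castSucc⟩, fun p _ q _ h => ?_, fun ⟨s, p⟩ ⟨hs, hp⟩ => ?_⟩
  · have hlast := hp (Fin.last n)
    rw [Fin.val_last] at hlast
    exact mem_Icc.2 (by dsimp only; omega)
  · obtain ⟨hlast, hinit⟩ := Prod.mk.inj h
    ext i
    cases i using Fin.lastCases with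
    | last => omega
    | cast i => exact congrFun hinit i
  · have hs := mem_Icc.1 hs
    refine ⟨Fin.snoc p (s + n).toNat, fun i => ?_, ?_⟩
    · cases i using Fin.lastCases with
      | last =>
        rw [Fin.snoc_last, Fin.val_last]
        dsimp only at hs
        omega
      | cast i => simpa using hp i
    · simp only [Fin.snoc_last, Fin.snoc_castSucc, Prod.mk.injEq, and_true]
      dsimp only at hs
      omega

namespace LayerRule

variable (R : LayerRule) {n : ℕ}

/-- Iterates the growth map along a sequence: `DTS` for `stripRule` and `DTR` for `ribbonRule`. -/
def build : (n : ℕ) → (Fin n → ℕ) → Diagram n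
  | 0, _ => .empty
  | n + 1, p => R.grow ((p (Fin.last n) : ℤ) - n) (build n fun i => p i.castSucc)

lemma bijOn_build (n : ℕ) : Set.BijOn (R.build n) (growthSeqs n) (coverInclusiveTilings n) := by
  induction n with
  | zero =>
    have hseqs : growthSeqs 0 = Set.univ := by ext; simp [growthSeqs]
    have htilings : coverInclusiveTilings 0 = {.empty} := by
      ext D
      simp only [coverInclusiveTilings, Diagram.isTiling_zero_iff, Set.mem_ofPred_eq,
        Set.mem_singleton_iff, and_iff_left_iff_imp]
      rintro rfl
      simp [Diagram.CoverInclusive, Diagram.empty]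
    rw [hseqs, htilings, Set.univ_unique]
    exact Set.bijOn_singleton.2 rfl
  | succ n ih =>
    have hstep := ((Set.bijOn_id (Icc (-(n : ℤ)) n : Set ℤ)).prodMap ih).comp
      (bijOn_growthSeqs_succ n)
    exact (R.bijOn_grow n).comp hstep

variable {p : Fin n → ℕ} {T : DyckTiling n}

lemma existsUnique_diagram_eq_build (hp : p ∈ growthSeqs n) :
    ∃! T : DyckTiling n, T.diagram = R.build n p := by
  obtain ⟨T, hT⟩ := ((R.bijOn_build n).mapsTo hp).1.exists_diagram_eq
  exact ⟨T, hT, fun T' hT' => DyckTiling.diagram_injective (hT'.trans hT.symm)⟩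

lemma coverInclusive_of_diagram_eq_build (hp : p ∈ growthSeqs n) (hT : T.diagram = R.build n p) :
    T.CoverInclusive :=
  show T.diagram.CoverInclusive from hT ▸ ((R.bijOn_build n).mapsTo hp).2

lemma existsUnique_build_eq_diagram (hT : T.CoverInclusive) :
    ∃! p : Fin n → ℕ, p ∈ growthSeqs n ∧ T.diagram = R.build n p := by
  obtain ⟨p, hp, hpT⟩ := (R.bijOn_build n).surjOn ⟨T.isTiling_diagram, hT⟩
  exact ⟨p, ⟨hp, hpT.symm⟩, fun q ⟨hq, hqT⟩ =>
    (R.bijOn_build n).injOn hq hp (hqT.symm.trans hpT.symm)⟩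

lemma iff_diagram_eq_build_of_step {G : (n : ℕ) → (Fin n → ℕ) → DyckTiling n → Prop}
    (hzero : ∀ p T, G 0 p T)
    (hsucc : ∀ n (p : Fin (n + 1) → ℕ) T', p ∈ growthSeqs (n + 1) → (G (n + 1) p T' ↔
      ∃ T, G n (fun i => p i.castSucc) T ∧
        T'.diagram = R.grow ((p (Fin.last n) : ℤ) - n) T.diagram))
    (hp : p ∈ growthSeqs n) : G n p T ↔ T.diagram = R.build n p := by
  induction n with
  | zero => exact iff_of_true (hzero p T) (Diagram.isTiling_zero_iff.1 T.isTiling_diagram)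
  | succ n ih =>
    have hinit : (fun i => p i.castSucc) ∈ growthSeqs n := ((bijOn_growthSeqs_succ n).mapsTo hp).2
    rw [hsucc n p T hp, build]
    constructor
    · rintro ⟨T₀, hT₀, hT⟩
      rw [hT, (ih hinit).1 hT₀]
    · intro hT
      obtain ⟨T₀, hT₀, -⟩ := R.existsUnique_diagram_eq_build hinit
      exact ⟨T₀, (ih hinit).2 hT₀, hT₀ ▸ hT⟩

end LayerRule

end Iteration

section GrowthRelations

variable {n : ℕ} {s : ℤ} {T : DyckTiling n} {T' : DyckTiling (n + 1)}

lemma Diagram.mem_upStarts_of_hasBigPeak {D : Diagram n} {x : ℤ} (hD : D.IsTiling)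
    (hs : D.HasBigPeak s) : x ∈ D.upStarts s ↔ s ≤ x ∧ D.upper (x + 1) = D.upper x + 1 := by
  rw [mem_upStarts]
  refine and_congr_left fun hup => ⟨fun h => h.1.le, fun hsx => ⟨?_, ?_⟩⟩
  · refine hsx.lt_of_ne ?_
    rintro rfl
    have := hs.2
    omega
  · by_contra! hxn
    have := hD.isDyckHt_upper.eq_zero (x + 1)
    have := hD.isDyckHt_upper.nonneg x
    omega

lemma stripGrowRel_iff (hs : s ∈ Icc (-(n : ℤ)) n) :
    StripGrowRel T s T' ↔ T'.diagram = stripRule.grow s T.diagram := by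
  have hmem := fun x => Diagram.mem_upStarts_of_hasBigPeak (x := x)
    ((Diagram.isTiling_spread_iff hs).2 T.isTiling_diagram) (T.diagram.hasBigPeak_spread s)
  have hcols : {x ∈ Icc s (n : ℤ) | spreadHt T.upper s (x + 1) = spreadHt T.upper s x + 1} =
      (T.diagram.spread s).upStarts s := by
    ext x
    rw [hmem, mem_filter, mem_Icc]
    refine ⟨fun h => ⟨h.1.1, h.2⟩, fun h => ⟨⟨h.1, ?_⟩, h.2⟩⟩
    have := (Diagram.mem_upStarts.1 ((hmem x).2 h)).1.2
    omega
  rw [Diagram.ext_iff, funext_iff, funext_iff, StripGrowRel, hcols]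
  simp only [LayerRule.grow, Diagram.addLayer, stripRule, hmem]
  rfl

lemma ribbonGrowRel_iff (hs : s ∈ Icc (-(n : ℤ)) n) :
    RibbonGrowRel T s T' ↔ T'.diagram = ribbonRule.grow s T.diagram := by
  have hspread := (Diagram.isTiling_spread_iff hs).2 T.isTiling_diagram
  obtain ⟨c, hc⟩ := hspread.exists_isSpecialCol (T.diagram.hasBigPeak_spread s).1
  rw [Diagram.ext_iff, funext_iff, funext_iff]
  simp only [LayerRule.grow, Diagram.addLayer, ribbonRule,
    hspread.colsBeforeEligible_of_isSpecialCol hc, mem_Ioo]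
  refine and_congr_right fun _ => ⟨?_, fun h => ⟨c, hc.1, hc.2, h⟩⟩
  rintro ⟨q, hq, hqmax, h⟩
  obtain rfl : c = q := hc.unique ⟨hq, hqmax⟩
  exact h

variable {p : Fin n → ℕ}

lemma isDTS_iff (hp : p ∈ growthSeqs n) : IsDTS n p T ↔ T.diagram = stripRule.build n p := by
  refine stripRule.iff_diagram_eq_build_of_step IsDTS.nil (fun n p T' hp => ?_) hp
  simp only [← stripGrowRel_iff ((bijOn_growthSeqs_succ n).mapsTo hp).1]
  exact ⟨fun | .cons _ _ T _ hT hstep => ⟨T, hT, hstep⟩,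
    fun ⟨T, hT, hstep⟩ => .cons _ _ T _ hT hstep⟩

lemma isDTR_iff (hp : p ∈ growthSeqs n) : IsDTR n p T ↔ T.diagram = ribbonRule.build n p := by
  refine ribbonRule.iff_diagram_eq_build_of_step IsDTR.nil (fun n p T' hp => ?_) hp
  simp only [← ribbonGrowRel_iff ((bijOn_growthSeqs_succ n).mapsTo hp).1]
  exact ⟨fun | .cons _ _ T _ hT hstep => ⟨T, hT, hstep⟩,
    fun ⟨T, hT, hstep⟩ => .cons _ _ T _ hT hstep⟩

end GrowthRelations

/-- The maps `DTS` and `DTR` are bijections from integer sequences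
`(p_1, …, p_n)` with `0 ≤ p_i ≤ 2(i-1)` (0-indexed: `p i ≤ 2 i`) onto the set of
cover-inclusive Dyck tilings of order `n`. -/
theorem DTS_DTR_bijective (n : ℕ) :
    (∀ p : Fin n → ℕ, (∀ i, p i ≤ 2 * (i : ℕ)) →
      (∃! T : DyckTiling n, IsDTS n p T) ∧
      (∃! T : DyckTiling n, IsDTR n p T) ∧
      (∀ T : DyckTiling n, IsDTS n p T → T.CoverInclusive) ∧
      (∀ T : DyckTiling n, IsDTR n p T → T.CoverInclusive)) ∧
    (∀ T : DyckTiling n, T.CoverInclusive →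
      (∃! p : Fin n → ℕ, (∀ i, p i ≤ 2 * (i : ℕ)) ∧ IsDTS n p T) ∧
      (∃! p : Fin n → ℕ, (∀ i, p i ≤ 2 * (i : ℕ)) ∧ IsDTR n p T)) := by
  refine ⟨fun p hp => ?_, fun T hT => ?_⟩
  · simp only [isDTS_iff hp, isDTR_iff hp]
    exact ⟨stripRule.existsUnique_diagram_eq_build hp,
      ribbonRule.existsUnique_diagram_eq_build hp,
      fun T => stripRule.coverInclusive_of_diagram_eq_build hp,
      fun T => ribbonRule.coverInclusive_of_diagram_eq_build hp⟩
  · have hDTS := stripRule.existsUnique_build_eq_diagram hT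
    have hDTR := ribbonRule.existsUnique_build_eq_diagram hT
    exact ⟨(existsUnique_congr fun p => and_congr_right isDTS_iff).2 hDTS,
      (existsUnique_congr fun p => and_congr_right isDTR_iff).2 hDTR⟩

end
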